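/- Let f be a non-wandering homeomorphism of the open annulus 𝔸 = 𝕋¹ × ℝ homotopic to the identity, and suppose f has no periodic points. Then every nonempty open f-invariant set V ⊆ 𝔸 contains an essential simple closed curve. -/

import Mathlib

open Filter Topology

local notation "⟪" x ", " y "⟫" => @inner ℝ _ _ x y

noncomputable section

/-- The open annulus `𝔸 = 𝕋¹ × ℝ`. -/
abbrev Ann := AddCircle (1 : ℝ) × ℝ

/-- `S ⊆ 𝔸` is unbounded from above in the `ℝ`-coordinate. -/
def UnbAbove (S : Set Ann) : Prop := ¬ BddAbove (Prod.snd '' S)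

/-- `S ⊆ 𝔸` is unbounded from below in the `ℝ`-coordinate. -/
def UnbBelow (S : Set Ann) : Prop := ¬ BddBelow (Prod.snd '' S)

/-- `S ⊆ 𝔸` is bounded (equivalently, bounded in the `ℝ`-coordinate). -/
def BoundedA (S : Set Ann) : Prop := BddAbove (Prod.snd '' S) ∧ BddBelow (Prod.snd '' S)

/-- `E ⊆ 𝔸` is essential: no connected component of its complement is unbounded both
above and below. -/
def EssentialA (E : Set Ann) : Prop :=
  ∀ x ∈ Eᶜ, ¬ (UnbAbove (connectedComponentIn Eᶜ x) ∧ UnbBelow (connectedComponentIn Eᶜ x))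

/-- An annular continuum: a compact connected set whose complement has exactly two
connected components, both unbounded. -/
def IsAnnularContinuum (E : Set Ann) : Prop :=
  IsCompact E ∧ IsConnected E ∧
  (∀ x ∈ Eᶜ, ¬ BoundedA (connectedComponentIn Eᶜ x)) ∧
  ∃ x y, x ∈ Eᶜ ∧ y ∈ Eᶜ ∧ connectedComponentIn Eᶜ x ≠ connectedComponentIn Eᶜ y ∧
    ∀ z ∈ Eᶜ, connectedComponentIn Eᶜ z = connectedComponentIn Eᶜ x ∨
      connectedComponentIn Eᶜ z = connectedComponentIn Eᶜ y

/-- A circloid: an annular continuum containing no strictly smaller annular continuum. -/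
def IsCircloidA (C : Set Ann) : Prop :=
  IsAnnularContinuum C ∧ ∀ E ⊆ C, IsAnnularContinuum E → E = C

/-- `ℒ(U)`: the connected component of `𝔸 \ cl(U)` unbounded from below (for a
generating set it is unique; in general we take the union of all components of
`𝔸 \ cl(U)` unbounded from below). -/
def lowerComp (U : Set Ann) : Set Ann :=
  {z | z ∈ (closure U)ᶜ ∧ UnbBelow (connectedComponentIn (closure U)ᶜ z)}

/-- `𝒰(L)`: the connected component of `𝔸 \ cl(L)` unbounded from above. -/
def upperComp (L : Set Ann) : Set Ann :=
  {z | z ∈ (closure L)ᶜ ∧ UnbAbove (connectedComponentIn (closure L)ᶜ z)}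

/-- An upper generating set: bounded from below with essential closure. -/
def UpperGen (U : Set Ann) : Prop := BddBelow (Prod.snd '' U) ∧ EssentialA (closure U)

/-- A lower generating set: bounded from above with essential closure. -/
def LowerGen (L : Set Ann) : Prop := BddAbove (Prod.snd '' L) ∧ EssentialA (closure L)

/-- `𝒞⁻(U) = 𝔸 \ (𝒰ℒ(U) ∪ ℒ𝒰ℒ(U))`. -/
def Cminus (U : Set Ann) : Set Ann :=
  (upperComp (lowerComp U) ∪ lowerComp (upperComp (lowerComp U)))ᶜ

/-- `𝒞⁺(L) = 𝔸 \ (ℒ𝒰(L) ∪ 𝒰ℒ𝒰(L))`. -/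
def Cplus (L : Set Ann) : Set Ann :=
  (lowerComp (upperComp L) ∪ upperComp (lowerComp (upperComp L)))ᶜ

/-- `f` is non-wandering: no nonempty open set `U` satisfies `fⁿ(U) ∩ U = ∅` for all
`n ≥ 1`. -/
def NonWandering {X : Type*} [TopologicalSpace X] (f : X → X) : Prop :=
  ∀ U : Set X, IsOpen U → U.Nonempty → ∃ n : ℕ, 1 ≤ n ∧ (f^[n] '' U ∩ U).Nonempty

/-- `f` has a periodic point. -/
def HasPeriodicPoint {X : Type*} (f : X → X) : Prop :=
  ∃ (x : X) (q : ℕ), 1 ≤ q ∧ f^[q] x = x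

/-- The covering map `p : ℝ² → 𝔸`. -/
def projA (z : ℝ × ℝ) : Ann := ((z.1 : AddCircle (1 : ℝ)), z.2)

/-- `G` is a lift of `f : 𝔸 → 𝔸`:  `p ∘ G = f ∘ p` and `G (z + (1,0)) = G z + (1,0)`.
The existence of such a lift expresses that `f` is homotopic to the identity. -/
def IsLiftA (f : Ann ≃ₜ Ann) (G : (ℝ × ℝ) ≃ₜ (ℝ × ℝ)) : Prop :=
  (∀ z : ℝ × ℝ, projA (G z) = f (projA z)) ∧
  ∀ z : ℝ × ℝ, G (z + (1, 0)) = G z + (1, 0)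

/-- A simple closed curve in `𝔸`: a subset homeomorphic to the circle. -/
def IsSimpleClosedCurveA (Γ : Set Ann) : Prop :=
  ∃ e : AddCircle (1 : ℝ) → Ann, IsEmbedding e ∧ Γ = Set.range e

/-!
Let `U` be a connected component of the lift of `V` to the plane. If `U` meets one of its deck
translates, some Lipschitz path in the lift of `V` has displacement `(k, 0)` with `k ≠ 0`; in the
compact image of one such path, a shortest loop with nonzero winding exists, and it is simple, since
at a self-intersection one of the two subloops would be a shorter competitor.

Otherwise `U` injects into `𝔸`. Since `f` is non-wandering, some lift `F` of an iterate `fⁿ` maps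
`U` into itself; `F ∘ F` is orientation preserving, has no fixed point, and has no wandering point
in `U`. This contradicts Brouwer's theorem that every point is wandering for a fixed-point free
orientation preserving homeomorphism `h` of the plane. A point returning to a small free disk can be
made periodic by composing `h` with a push supported in the disk, so it is enough to exclude
periodic points of `h`. Growing a free disk around a periodic point until it touches its image gives
a translation line of `h` that returns to itself, and along the loop closed up at the first return
the chord from `z` to `h z` would turn in two incompatible ways.
-/

section ContinuousLogarithm

lemma exists_continuousOn_exp_eq {E : Type*} [NormedAddCommGroup E] [NormedSpace ℝ E]
    {U : Set E} (hU : Convex ℝ U) (hne : U.Nonempty) (ho : IsOpen U) {g : E → ℂ}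
    (hg : ContinuousOn g U) (h0 : ∀ x ∈ U, g x ≠ 0) :
    ∃ l : E → ℂ, ContinuousOn l U ∧ ∀ x ∈ U, Complex.exp (l x) = g x := by
  have : ContractibleSpace U := hU.contractibleSpace hne
  have hs : IsSimplyConnected U := by unfold IsSimplyConnected; infer_instance
  exact Complex.exists_continuousOn_eqOn_exp_comp hs ho hg fun ⟨x, hx, hx0⟩ => h0 x hx hx0

lemma exists_continuous_exp_eq {E : Type*} [NormedAddCommGroup E] [NormedSpace ℝ E]
    {g : E → ℂ} (hg : Continuous g) (h0 : ∀ x, g x ≠ 0) :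
    ∃ l : E → ℂ, Continuous l ∧ ∀ x, Complex.exp (l x) = g x := by
  simpa using exists_continuousOn_exp_eq convex_univ Set.univ_nonempty isOpen_univ
    hg.continuousOn fun x _ => h0 x

variable {X : Type*} [TopologicalSpace X]

lemma eq_of_isPreconnected_of_exp_eq_one {S : Set X} (hS : IsPreconnected S) {u : X → ℂ}
    (hu : ContinuousOn u S) (h1 : ∀ x ∈ S, Complex.exp (u x) = 1) {x y : X} (hx : x ∈ S)
    (hy : y ∈ S) : u x = u y := by
  have hdisc : IsDiscrete (Complex.exp ⁻¹' {1}) := by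
    have := (Complex.isCoveringMapOn_exp 1 one_ne_zero).discreteTopology_fiber
    exact isDiscrete_iff_discreteTopology.2 this
  exact hS.constant_of_mapsTo hdisc hu h1 hx hy

lemma continuousOn_comp_log {Y : Type*} [TopologicalSpace Y] {W : X × ℂ → Y}
    (hW : Continuous W)
    (hper : ∀ x ζ ζ', Complex.exp ζ = Complex.exp ζ' → W (x, ζ) = W (x, ζ')) :
    ContinuousOn (fun p : X × ℂ => W (p.1, Complex.log p.2)) {p | p.2 ≠ 0} := by
  rintro ⟨x, z⟩ (hz : z ≠ 0)
  have hmap : 𝓝 (x, z) = map (Prod.map id Complex.exp) (𝓝 (x, Complex.log z)) := by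
    rw [(IsOpenMap.id.prodMap Complex.isOpenMap_exp).map_nhds_eq
      (by fun_prop), Prod.map_apply, id, Complex.exp_log hz]
  refine ContinuousAt.continuousWithinAt ?_
  rw [ContinuousAt, hmap, tendsto_map'_iff]
  refine (hW.tendsto (x, Complex.log z)).congr fun p => hper _ _ _ ?_
  exact (Complex.exp_log (Complex.exp_ne_zero p.2)).symm

end ContinuousLogarithm

lemma isPreconnected_compl_diagonal {E : Type*} [AddCommGroup E] [Module ℝ E]
    [TopologicalSpace E] [ContinuousAdd E] [ContinuousSMul ℝ E] (hE : 1 < Module.rank ℝ E) :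
    IsPreconnected (Set.diagonal E)ᶜ := by
  have himage : (Set.diagonal E)ᶜ =
      (fun p : E × E => (p.1 + p.2, p.1)) '' (Set.univ ×ˢ {0}ᶜ) := by
    ext ⟨z, w⟩
    refine ⟨fun h => ⟨(w, z - w), ⟨trivial, sub_ne_zero.2 h⟩, by simp⟩, ?_⟩
    rintro ⟨⟨a, b⟩, ⟨-, hb⟩, hab⟩
    obtain ⟨rfl, rfl⟩ := Prod.mk.inj hab
    simpa using hb
  have : ConnectedSpace E := inferInstance
  rw [himage]
  exact (isPreconnected_univ.prod
    (isConnected_compl_singleton_of_one_lt_rank hE 0).isPreconnected).image _ (by fun_prop)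

section Orientation

/-- `L` is a continuous logarithm of the difference quotient `(h z - h w) / (z - w)` of a plane
map `h`, defined off the diagonal. -/
def IsSecantLog (h : ℂ → ℂ) (L : ℂ × ℂ → ℂ) : Prop :=
  ContinuousOn L (Set.diagonal ℂ)ᶜ ∧
    ∀ z w, z ≠ w → Complex.exp (L (z, w)) * (z - w) = h z - h w

/-- Orientation preserving injective maps of the plane, encoded without degree theory: as `w`
turns once around `z`, the direction of `h w - h z` turns once as well, so that the difference
quotient of `h` has a continuous logarithm. -/
def OrientationPreserving (h : ℂ → ℂ) : Prop := ∃ L, IsSecantLog h L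

lemma IsSecantLog.apply_swap {h : ℂ → ℂ} {L : ℂ × ℂ → ℂ} (hL : IsSecantLog h L) {z w : ℂ}
    (hzw : z ≠ w) : L (w, z) = L (z, w) := by
  have hcont : ContinuousOn (fun p => L p - L p.swap) (Set.diagonal ℂ)ᶜ :=
    hL.1.sub (hL.1.comp continuous_swap.continuousOn fun p hp => Ne.symm hp)
  have hexp : ∀ p ∈ (Set.diagonal ℂ)ᶜ, Complex.exp (L p - L p.swap) = 1 := by
    rintro ⟨a, b⟩ (hab : a ≠ b)
    rw [Complex.exp_sub, div_eq_one_iff_eq (Complex.exp_ne_zero _)]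
    apply mul_right_cancel₀ (sub_ne_zero.2 hab)
    rw [Prod.swap_prod_mk]
    linear_combination hL.2 a b hab + hL.2 b a hab.symm
  have hconst : L (z, w) - L (w, z) = L (w, z) - L (z, w) :=
    eq_of_isPreconnected_of_exp_eq_one (isPreconnected_compl_diagonal (by simp)) hcont hexp
      (x := (z, w)) (y := (w, z)) hzw hzw.symm
  linear_combination (-1 / 2 : ℂ) * hconst

lemma OrientationPreserving.comp {h k : ℂ → ℂ} (hh : OrientationPreserving h)
    (hk : OrientationPreserving k) (hkc : Continuous k) (hki : Function.Injective k) :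
    OrientationPreserving (h ∘ k) := by
  obtain ⟨L, hLc, hL⟩ := hh
  obtain ⟨M, hMc, hM⟩ := hk
  refine ⟨fun p => L (k p.1, k p.2) + M p, ?_, fun z w hzw => ?_⟩
  · exact (hLc.comp (by fun_prop) fun p hp => hki.ne hp).add hMc
  · rw [Complex.exp_add, mul_assoc, hM z w hzw, hL _ _ (hki.ne hzw)]
    rfl

lemma OrientationPreserving.symm {h : ℂ ≃ₜ ℂ} (hh : OrientationPreserving h) :
    OrientationPreserving h.symm := by
  obtain ⟨L, hLc, hL⟩ := hh
  refine ⟨fun p => -L (h.symm p.1, h.symm p.2), ?_, fun z w hzw => ?_⟩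
  · exact (hLc.comp (by fun_prop) fun p hp => h.symm.injective.ne hp).neg
  · have := hL _ _ (h.symm.injective.ne hzw)
    rw [h.apply_symm_apply, h.apply_symm_apply] at this
    rw [← this, ← mul_assoc, ← Complex.exp_add, neg_add_cancel, Complex.exp_zero, one_mul]

end Orientation

section Square

open Complex

/-- `V` is a continuous logarithm of the increment `h (w + exp ζ) - h w` of a plane map, in
logarithmic polar coordinates around the base point `w`. -/
def IsIncrementLog (h : ℂ → ℂ) (V : ℂ × ℂ → ℂ) : Prop :=
  Continuous V ∧ ∀ w ζ, exp (V (w, ζ)) = h (w + exp ζ) - h w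

/-- Turning once around the base point adds `d` turns to the increment whose logarithm is `V`:
`d` is the local degree of the underlying plane map. -/
def HasMonodromy (V : ℂ × ℂ → ℂ) (d : ℤ) : Prop :=
  ∀ w ζ, V (w, ζ + 2 * Real.pi * I) = V (w, ζ) + d • (2 * Real.pi * I)

lemma exists_isIncrementLog {h : ℂ → ℂ} (hc : Continuous h) (hi : Function.Injective h) :
    ∃ V, IsIncrementLog h V := by
  obtain ⟨V, hVc, hV⟩ := exists_continuous_exp_eq
    (g := fun p : ℂ × ℂ => h (p.1 + exp p.2) - h p.1) (by fun_prop)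
    fun p => sub_ne_zero.2 (hi.ne (by simp))
  exact ⟨V, hVc, fun w ζ => hV (w, ζ)⟩

lemma IsIncrementLog.exists_hasMonodromy {h : ℂ → ℂ} {V : ℂ × ℂ → ℂ}
    (hV : IsIncrementLog h V) : ∃ d, HasMonodromy V d := by
  have hVc := hV.1
  set u : ℂ × ℂ → ℂ := fun p => V (p.1, p.2 + 2 * Real.pi * I) - V p with hu
  have hexp : ∀ p, exp (u p) = 1 := by
    rintro ⟨w, ζ⟩
    rw [hu, exp_sub, div_eq_one_iff_eq (exp_ne_zero _), hV.2, hV.2, exp_periodic]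
  obtain ⟨d, hd⟩ := exp_eq_one_iff.1 (hexp 0)
  refine ⟨d, fun w ζ => ?_⟩
  have hconst : u (w, ζ) = u 0 := eq_of_isPreconnected_of_exp_eq_one isPreconnected_univ
    (by fun_prop) (fun p _ => hexp p) trivial trivial
  rw [hd, ← zsmul_eq_mul] at hconst
  exact sub_eq_iff_eq_add'.1 hconst

lemma HasMonodromy.apply_add_zsmul {V : ℂ × ℂ → ℂ} {d : ℤ} (hd : HasMonodromy V d) (w ζ : ℂ)
    (k : ℤ) : V (w, ζ + k • (2 * Real.pi * I)) = V (w, ζ) + (k * d) • (2 * Real.pi * I) := by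
  let Vw : AddConstMap ℂ ℂ (2 * Real.pi * I) (d • (2 * Real.pi * I)) :=
    ⟨fun ζ => V (w, ζ), hd w⟩
  rw [mul_smul]
  exact AddConstMapClass.map_add_zsmul Vw ζ k

lemma HasMonodromy.mul_self_eq_one {h : ℂ ≃ₜ ℂ} {V : ℂ × ℂ → ℂ} {d : ℤ}
    (hV : IsIncrementLog h V) (hd : HasMonodromy V d) : d * d = 1 := by
  obtain ⟨V', hV'⟩ := exists_isIncrementLog h.symm.continuous h.symm.injective
  obtain ⟨d', hd'⟩ := hV'.exists_hasMonodromy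
  have hVc := hV.1
  have hVc' := hV'.1
  have hexp : ∀ p : ℂ × ℂ, exp (V' (h p.1, V p) - p.2) = 1 := by
    rintro ⟨w, ζ⟩
    simp [exp_sub, hV'.2, hV.2]
  have hconst := eq_of_isPreconnected_of_exp_eq_one isPreconnected_univ
    (u := fun p : ℂ × ℂ => V' (h p.1, V p) - p.2) (by fun_prop) (fun p _ => hexp p)
    (x := (0, 0 + 2 * Real.pi * I)) (y := (0, 0)) trivial trivial
  simp only [hd 0 0, hd'.apply_add_zsmul] at hconst
  have hdd' : d * d' = 1 := by
    have : ((d * d' : ℤ) : ℂ) * (2 * Real.pi * I) = 1 * (2 * Real.pi * I) := by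
      rw [← zsmul_eq_mul]
      linear_combination hconst
    exact_mod_cast mul_right_cancel₀ two_pi_I_ne_zero this
  rcases Int.eq_one_or_neg_one_of_mul_eq_one hdd' with rfl | rfl <;> rfl

theorem orientationPreserving_comp_self (h : ℂ ≃ₜ ℂ) : OrientationPreserving (h ∘ h) := by
  obtain ⟨V, hV⟩ := exists_isIncrementLog h.continuous h.injective
  obtain ⟨d, hd⟩ := hV.exists_hasMonodromy
  have hVc := hV.1
  set W : ℂ × ℂ → ℂ := fun p => V (h p.1, V p) - p.2 with hW
  have hWexp (w ζ) : exp (W (w, ζ)) * exp ζ = h (h (w + exp ζ)) - h (h w) := by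
    rw [← exp_add, hW, sub_add_cancel, hV.2, hV.2, add_sub_cancel]
  have hWper (w ζ ζ') (hζ : exp ζ = exp ζ') : W (w, ζ) = W (w, ζ') := by
    obtain ⟨k, rfl⟩ := exp_eq_exp_iff_exists_int.1 hζ
    simp only [hW, ← zsmul_eq_mul, hd.apply_add_zsmul, mul_assoc k d d, hd.mul_self_eq_one hV,
      mul_one, add_sub_add_right_eq_sub]
  refine ⟨fun p => W (p.2, log (p.1 - p.2)), ?_, fun z w hzw => ?_⟩
  · exact (continuousOn_comp_log (by fun_prop) hWper).comp
      (f := fun p : ℂ × ℂ => (p.2, p.1 - p.2)) (by fun_prop) fun p hp => sub_ne_zero.2 hp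
  · have := hWexp w (log (z - w))
    rwa [exp_log (sub_ne_zero.2 hzw), add_sub_cancel] at this

end Square

section Turning

open Complex

/-- The parameter pairs `(s, t)` with `0 < t - s < τ`. -/
def chordStrip (τ : ℝ) : Set (ℝ × ℝ) := {p | p.2 - p.1 ∈ Set.Ioo 0 τ}

/-- `Λ` is a continuous logarithm of the chords `γ t - γ s`, `0 < t - s < τ`, of the plane
curve `γ`; its variation measures how much the chords turn. -/
def IsChordLog (γ : ℝ → ℂ) (τ : ℝ) (Λ : ℝ × ℝ → ℂ) : Prop :=
  ContinuousOn Λ (chordStrip τ) ∧ ∀ p ∈ chordStrip τ, exp (Λ p) = γ p.2 - γ p.1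

lemma mk_add_mem_chordStrip {s δ τ : ℝ} (hδ : δ ∈ Set.Ioo 0 τ) : (s, s + δ) ∈ chordStrip τ := by
  simpa [chordStrip] using hδ

lemma mk_sub_mem_chordStrip {t δ τ : ℝ} (hδ : δ ∈ Set.Ioo 0 τ) : (t - δ, t) ∈ chordStrip τ := by
  simpa [chordStrip] using hδ

lemma convex_chordStrip (τ : ℝ) : Convex ℝ (chordStrip τ) :=
  (convex_Ioo 0 τ).linear_preimage (LinearMap.snd ℝ ℝ ℝ - LinearMap.fst ℝ ℝ ℝ)

lemma isOpen_chordStrip (τ : ℝ) : IsOpen (chordStrip τ) :=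
  isOpen_Ioo.preimage (by fun_prop : Continuous fun p : ℝ × ℝ => p.2 - p.1)

variable {γ : ℝ → ℂ} {τ a : ℝ} {Λ : ℝ × ℝ → ℂ}

lemma exists_isChordLog (hγ : Continuous γ) (hτ : 0 < τ)
    (hinj : ∀ p ∈ chordStrip τ, γ p.1 ≠ γ p.2) : ∃ Λ, IsChordLog γ τ Λ :=
  exists_continuousOn_exp_eq (convex_chordStrip τ)
    ⟨_, mk_add_mem_chordStrip (s := 0) ⟨half_pos hτ, half_lt_self hτ⟩⟩ (isOpen_chordStrip τ)
    (by fun_prop) fun p hp => sub_ne_zero.2 (hinj p hp).symm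

lemma IsChordLog.ne (hΛ : IsChordLog γ τ Λ) {p : ℝ × ℝ} (hp : p ∈ chordStrip τ) :
    γ p.2 ≠ γ p.1 :=
  sub_ne_zero.1 (hΛ.2 p hp ▸ exp_ne_zero (Λ p))

/-- The left-hand side is the total turning of the tangent of the simple closed curve
`γ|[a, a + τ]`, computed through chords as in Hopf's Umlaufsatz. It does not depend on `δ`, and at
`δ = τ / 2` its vanishing would make the two chords of the bisected loop equal. -/
lemma IsChordLog.turning_ne_zero (hΛ : IsChordLog γ τ Λ) (hclosed : γ (a + τ) = γ a) {δ : ℝ}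
    (hδ : δ ∈ Set.Ioo 0 τ) :
    Λ (a + τ - δ, a + τ) - Λ (a, a + δ) + Λ (a + δ, a + τ) - Λ (a, a + τ - δ) ≠ 0 := by
  set Q : ℝ → ℂ := fun δ =>
    Λ (a + τ - δ, a + τ) - Λ (a, a + δ) + Λ (a + δ, a + τ) - Λ (a, a + τ - δ) with hQ
  have hmem {δ : ℝ} (hδ : δ ∈ Set.Ioo 0 τ) :
      (a + δ, a + τ) ∈ chordStrip τ ∧ (a, a + τ - δ) ∈ chordStrip τ := by
    constructor <;> constructor <;> simp only <;> linarith [hδ.1, hδ.2]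
  have hexp : ∀ δ ∈ Set.Ioo 0 τ, exp (Q δ) = 1 := by
    intro δ hδ
    have hne₁ := sub_ne_zero.2 (hΛ.ne (mk_add_mem_chordStrip (s := a) hδ))
    have hne₂ := sub_ne_zero.2 (hΛ.ne (hmem hδ).2)
    rw [hQ, exp_sub, exp_add, exp_sub, hΛ.2 _ (mk_sub_mem_chordStrip hδ),
      hΛ.2 _ (mk_add_mem_chordStrip hδ), hΛ.2 _ (hmem hδ).1, hΛ.2 _ (hmem hδ).2]
    simp only [hclosed] at hne₁ hne₂ ⊢
    field_simp
    ring
  have hcont : ContinuousOn Q (Set.Ioo 0 τ) :=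
    (((hΛ.1.comp (by fun_prop) fun δ => mk_sub_mem_chordStrip).sub
      (hΛ.1.comp (by fun_prop) fun δ => mk_add_mem_chordStrip)).add
      (hΛ.1.comp (by fun_prop) fun δ hδ => (hmem hδ).1)).sub
      (hΛ.1.comp (by fun_prop) fun δ hδ => (hmem hδ).2)
  have hhalf : τ / 2 ∈ Set.Ioo 0 τ := ⟨by linarith [hδ.1, hδ.2], by linarith [hδ.1, hδ.2]⟩
  have hconst : Q δ = Q (τ / 2) :=
    eq_of_isPreconnected_of_exp_eq_one isPreconnected_Ioo hcont hexp hδ hhalf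
  intro hzero
  have hmid : a + τ - τ / 2 = a + τ / 2 := by ring
  have heq : Λ (a + τ / 2, a + τ) = Λ (a, a + τ / 2) := by
    have : Q (τ / 2) = 0 := hconst.symm.trans hzero
    simp only [hQ, hmid] at this
    linear_combination this / 2
  have hchords := congrArg exp heq
  rw [hΛ.2 _ (hmem hhalf).1, hΛ.2 _ (mk_add_mem_chordStrip hhalf), hclosed] at hchords
  apply hΛ.ne (mk_add_mem_chordStrip (s := a) hhalf)
  linear_combination (-1 / 2 : ℂ) * hchords

variable {h : ℂ → ℂ} {L : ℂ × ℂ → ℂ}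

lemma IsChordLog.translate_sub_eq (hΛ : IsChordLog γ τ Λ) (hγ : Continuous γ)
    (hL : IsSecantLog h L) (hsemi : Function.Semiconj γ (· + 1) h) {p q : ℝ × ℝ}
    (hp : p ∈ chordStrip τ) (hq : q ∈ chordStrip τ) :
    Λ (p + (1, 1)) - Λ p - L (γ p.2, γ p.1) = Λ (q + (1, 1)) - Λ q - L (γ q.2, γ q.1) := by
  have hshift : ∀ p ∈ chordStrip τ, p + (1, 1) ∈ chordStrip τ := by simp [chordStrip]
  refine eq_of_isPreconnected_of_exp_eq_one (convex_chordStrip τ).isPreconnected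
    (u := fun p => Λ (p + (1, 1)) - Λ p - L (γ p.2, γ p.1)) ?_ ?_ hp hq
  · exact ((hΛ.1.comp (by fun_prop) hshift).sub hΛ.1).sub
      (hL.1.comp (by fun_prop) fun p hp => hΛ.ne hp)
  · intro p hp
    have hne := sub_ne_zero.2 (hΛ.ne hp)
    have hLne := exp_ne_zero (L (γ p.2, γ p.1))
    rw [exp_sub, exp_sub, hΛ.2 _ (hshift p hp), hΛ.2 _ hp, Prod.snd_add, Prod.fst_add,
      hsemi.eq, hsemi.eq, ← hL.2 _ _ (hΛ.ne hp)]
    field_simp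

lemma IsChordLog.apply_add_one_eq (hΛ : IsChordLog γ τ Λ) (hτ : 1 < τ) (hγ : Continuous γ)
    (hh : Continuous h) (hfix : ∀ z, h z ≠ z) (hsemi : Function.Semiconj γ (· + 1) h) {s t : ℝ}
    (hst : γ s = γ t) : Λ (s, s + 1) = Λ (t, t + 1) := by
  obtain ⟨M, hMc, hM⟩ := exists_continuous_exp_eq (g := fun z => h z - z) (by fun_prop)
    fun z => sub_ne_zero.2 (hfix z)
  have hmem (t : ℝ) : (t, t + 1) ∈ chordStrip τ := mk_add_mem_chordStrip ⟨one_pos, hτ⟩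
  have hcont : Continuous fun t : ℝ => Λ (t, t + 1) - M (γ t) :=
    (hΛ.1.comp_continuous (by fun_prop) hmem).sub (by fun_prop)
  have hconst := eq_of_isPreconnected_of_exp_eq_one isPreconnected_univ hcont.continuousOn
    (fun t _ => by
      rw [exp_sub, hΛ.2 _ (hmem t), hM, hsemi.eq, div_self (sub_ne_zero.2 (hfix _))])
    (x := s) (y := t) trivial trivial
  rw [hst] at hconst
  exact sub_left_injective hconst

/-- If the line closed up after time `τ`, then the unit chords at `a` and `a + τ` would coincide,
and `h` would turn the chords over `(a, a + τ - 1)` and `(a + τ - 1, a + τ)` equally, since they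
have the same endpoints. So the turning of the closed curve would vanish at `δ = 1`. -/
theorem OrientationPreserving.apply_add_ne_of_translationLine (hh : OrientationPreserving h)
    (hc : Continuous h) (hfix : ∀ z, h z ≠ z) (hγ : Continuous γ)
    (hsemi : Function.Semiconj γ (· + 1) h) (hτ : 1 < τ)
    (hinj : ∀ p ∈ chordStrip τ, γ p.1 ≠ γ p.2) : γ (a + τ) ≠ γ a := by
  intro hclosed
  obtain ⟨L, hL⟩ := hh
  obtain ⟨Λ, hΛ⟩ := exists_isChordLog hγ (one_pos.trans hτ) hinj
  have hone : (1 : ℝ) ∈ Set.Ioo 0 τ := ⟨one_pos, hτ⟩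
  have hmem : (a, a + τ - 1) ∈ chordStrip τ := by
    constructor <;> simp only <;> linarith
  have hunit : Λ (a + τ, a + τ + 1) = Λ (a, a + 1) :=
    hΛ.apply_add_one_eq hτ hγ hc hfix hsemi hclosed
  have htrans := hΛ.translate_sub_eq hγ hL hsemi (mk_sub_mem_chordStrip (t := a + τ) hone) hmem
  simp only [Prod.mk_add_mk, sub_add_cancel, hclosed, hL.apply_swap (hΛ.ne hmem)] at htrans
  apply hΛ.turning_ne_zero hclosed hone
  linear_combination hunit - htrans

end Turning

section TranslationLine

/-- A translation line of `h`: a curve on which `h` acts as the unit translation of the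
parameter, and which is injective on unit parameter intervals (so that `γ|[0, 1]` is a translation
arc in the sense of Brouwer). -/
structure IsTranslationLine {X : Type*} [TopologicalSpace X] (h : X → X) (γ : ℝ → X) : Prop where
  continuous : Continuous γ
  semiconj : Function.Semiconj γ (· + 1) h
  ne_of_sub_le_one : ∀ s t, 0 < t - s → t - s ≤ 1 → γ s ≠ γ t

lemma apply_add_natCast_of_semiconj {X : Type*} {h : X → X} {γ : ℝ → X}
    (hsemi : Function.Semiconj γ (· + 1) h) (n : ℕ) (t : ℝ) : γ (t + n) = h^[n] (γ t) := by
  have := hsemi.iterate_right n t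
  rwa [add_right_iterate, nsmul_one] at this

lemma apply_add_intCast_eq_of_semiconj {X : Type*} {h : X → X} {γ : ℝ → X}
    (hsemi : Function.Semiconj γ (· + 1) h) (hinj : Function.Injective h) {s t : ℝ}
    (hst : γ s = γ t) (n : ℤ) : γ (s + n) = γ (t + n) := by
  obtain ⟨k, rfl | rfl⟩ := n.eq_nat_or_neg
  · simp only [Int.cast_natCast, apply_add_natCast_of_semiconj hsemi, hst]
  · apply hinj.iterate k
    simpa only [← apply_add_natCast_of_semiconj hsemi, Int.cast_neg, Int.cast_natCast,
      neg_add_cancel_right] using hst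

lemma ne_of_forall_mem_Ico_ne {X : Type*} {h : X → X} {γ : ℝ → X}
    (hsemi : Function.Semiconj γ (· + 1) h) (hinj : Function.Injective h) {c : ℝ}
    (hc : ∀ s ∈ Set.Ico (0 : ℝ) 1, γ s ≠ γ (s + c)) (s : ℝ) : γ s ≠ γ (s + c) := fun he => by
  refine hc (Int.fract s) ⟨Int.fract_nonneg s, Int.fract_lt_one s⟩ ?_
  have := apply_add_intCast_eq_of_semiconj hsemi hinj he (-⌊s⌋)
  rwa [Int.cast_neg, ← sub_eq_add_neg, ← sub_eq_add_neg, add_sub_right_comm] at this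

lemma zpow_add_one_apply {X : Type*} [TopologicalSpace X] (h : X ≃ₜ X) (n : ℤ) (x : X) :
    (h ^ (n + 1)) x = (h ^ n) (h x) := by
  rw [zpow_add, zpow_one]
  rfl

lemma exists_semiconj_extension {X : Type*} [TopologicalSpace X] (h : X ≃ₜ X) {g : ℝ → X}
    (hg : ContinuousOn g (Set.Icc 0 1)) (h1 : g 1 = h (g 0)) :
    ∃ γ : ℝ → X, Continuous γ ∧ Function.Semiconj γ (· + 1) h ∧ Set.EqOn γ g (Set.Icc 0 1) := by
  set γ : ℝ → X := fun t => (h ^ ⌊t⌋) (g (Int.fract t)) with hγ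
  have hpiece (n : ℤ) : Set.EqOn γ (fun t => (h ^ n) (g (t - n))) (Set.Icc n (n + 1)) := by
    rintro t ⟨hnt, htn⟩
    rcases htn.eq_or_lt with rfl | htn
    · simp [hγ, zpow_add_one_apply, h1]
    · simp only [hγ, Int.fract, Int.floor_eq_iff.2 ⟨hnt, htn⟩]
  have hcont (n : ℤ) : ContinuousOn γ (Set.Icc n (n + 1)) := by
    refine ((h ^ n).continuous.comp_continuousOn (hg.comp (by fun_prop) ?_)).congr (hpiece n)
    exact fun t ht => ⟨sub_nonneg.2 ht.1, sub_le_iff_le_add'.2 ht.2⟩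
  refine ⟨γ, continuous_iff_continuousAt.2 fun t => ?_, fun t => ?_, ?_⟩
  · have hunion := (hcont (⌊t⌋ - 1)).union_of_isClosed (hcont ⌊t⌋) isClosed_Icc isClosed_Icc
    rw [Int.cast_sub, Int.cast_one, sub_add_cancel,
      Set.Icc_union_Icc_eq_Icc (by linarith) (by linarith)] at hunion
    exact hunion.continuousAt
      (Icc_mem_nhds (by linarith [Int.floor_le t]) (Int.lt_floor_add_one t))
  · simp only [hγ, Int.floor_add_one, Int.fract_add_one, add_comm _ (1 : ℤ), zpow_one_add]
    rfl
  · simpa using hpiece 0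

variable {E : Type*} [NormedAddCommGroup E] [NormedSpace ℝ E]

lemma exists_ball_free_with_sphere_return [ProperSpace E] (h : E ≃ₜ E) (hfix : ∀ z, h z ≠ z)
    (x : E) : ∃ r > 0, ∃ w, dist w x = r ∧ dist (h w) x = r ∧
      ∀ p ∈ Metric.ball x r, h p ∉ Metric.ball x r := by
  obtain ⟨w, hw⟩ := Continuous.exists_forall_le (f := fun p => max (dist p x) (dist (h p) x))
    (by fun_prop)
    (tendsto_atTop_mono (fun p => le_max_left _ _) (tendsto_dist_right_cocompact_atTop x))
  set r := max (dist w x) (dist (h w) x)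
  have hfree : ∀ p ∈ Metric.ball x r, h p ∉ Metric.ball x r :=
    fun p hp hhp => (hw p).not_gt (max_lt hp hhp)
  have hwr : w ∈ Metric.closedBall x r := Metric.mem_closedBall.2 (le_max_left _ _)
  have hhwr : h w ∈ Metric.closedBall x r := Metric.mem_closedBall.2 (le_max_right _ _)
  have hr0 : 0 < r := by
    refine (dist_nonneg.trans hwr).lt_of_ne fun h0 => hfix w ?_
    rw [← h0, Metric.closedBall_zero] at hwr hhwr
    exact hhwr.trans hwr.symm
  rw [← closure_ball x hr0.ne', mem_closure_iff] at hwr hhwr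
  refine ⟨r, hr0, w, (le_max_left _ _).antisymm ?_, (le_max_right _ _).antisymm ?_, hfree⟩
  · by_contra! hlt
    obtain ⟨_, hy, hyb⟩ := hhwr _ (h.isOpenMap _ Metric.isOpen_ball) ⟨w, hlt, rfl⟩
    obtain ⟨p, hp, rfl⟩ := hy
    exact hfree p hp hyb
  · by_contra! hlt
    obtain ⟨p, hhp, hp⟩ := hwr _ (Metric.isOpen_ball.preimage h.continuous) hlt
    exact hfree p hp hhp

/-- The polygonal path `x + u → x → x + v`, parametrized by `[0, 1]`. -/
def brokenLine (x u v : E) (t : ℝ) : E := x + max (1 - 2 * t) 0 • u + max (2 * t - 1) 0 • v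

lemma continuous_brokenLine (x u v : E) : Continuous (brokenLine x u v) := by
  unfold brokenLine
  fun_prop

lemma brokenLine_of_le {x u v : E} {t : ℝ} (ht : t ≤ 1 / 2) :
    brokenLine x u v t = x + (1 - 2 * t) • u := by
  rw [brokenLine, max_eq_left (by linarith), max_eq_right (by linarith), zero_smul, add_zero]

lemma brokenLine_of_ge {x u v : E} {t : ℝ} (ht : 1 / 2 ≤ t) :
    brokenLine x u v t = x + (2 * t - 1) • v := by
  rw [brokenLine, max_eq_right (by linarith), max_eq_left (by linarith), zero_smul, add_zero]

lemma dist_brokenLine {x u v : E} {r : ℝ} (hu : ‖u‖ = r) (hv : ‖v‖ = r) (t : ℝ) :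
    dist (brokenLine x u v t) x = |2 * t - 1| * r := by
  rcases le_total t (1 / 2) with ht | ht
  · rw [brokenLine_of_le ht, dist_self_add_left, norm_smul, hu, Real.norm_eq_abs, abs_sub_comm]
  · rw [brokenLine_of_ge ht, dist_self_add_left, norm_smul, hv, Real.norm_eq_abs]

lemma brokenLine_injective {x u v : E} {r : ℝ} (hr : 0 < r) (hu : ‖u‖ = r) (hv : ‖v‖ = r)
    (huv : u ≠ v) : Function.Injective (brokenLine x u v) := by
  refine Function.Injective.of_lt_imp_ne fun s t hst he => ?_
  have habs : |2 * s - 1| = |2 * t - 1| := by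
    refine mul_right_cancel₀ hr.ne' ?_
    rw [← dist_brokenLine (x := x) hu hv, ← dist_brokenLine (x := x) hu hv, he]
  rcases abs_eq_abs.1 habs with h | h
  · linarith
  · rw [brokenLine_of_le (by linarith), brokenLine_of_ge (t := t) (by linarith),
      show 1 - 2 * s = 2 * t - 1 by linarith] at he
    exact huv (smul_right_injective E (by linarith : 2 * t - 1 ≠ 0) (add_left_cancel he))

theorem exists_isTranslationLine [ProperSpace E] (h : E ≃ₜ E) (hfix : ∀ z, h z ≠ z) (x : E) :
    ∃ γ, IsTranslationLine h γ ∧ γ (1 / 2) = x := by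
  obtain ⟨r, hr, w, hw, hhw, hfree⟩ := exists_ball_free_with_sphere_return h hfix x
  rw [dist_eq_norm] at hw hhw
  set g := brokenLine x (w - x) (h w - x) with hg
  have hgend : g 1 = h (g 0) := by
    norm_num [hg, brokenLine]
  obtain ⟨γ, hγ, hsemi, hγg⟩ :=
    exists_semiconj_extension h (continuous_brokenLine x _ _).continuousOn hgend
  have hball : ∀ t ∈ Set.Ioo (0 : ℝ) 1, γ t ∈ Metric.ball x r := by
    intro t ht
    rw [hγg (Set.Ioo_subset_Icc_self ht), Metric.mem_ball, dist_brokenLine hw hhw]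
    exact mul_lt_of_lt_one_left hr (abs_lt.2 ⟨by linarith [ht.1], by linarith [ht.2]⟩)
  refine ⟨γ, ⟨hγ, hsemi, fun s t hpos hle => ?_⟩, ?_⟩
  · rw [← add_sub_cancel s t]
    refine ne_of_forall_mem_Ico_ne hsemi h.injective (fun s hs he => ?_) s
    set c := t - _
    rcases le_or_gt (s + c) 1 with hsc | hsc
    · rw [hγg ⟨hs.1, hs.2.le⟩, hγg ⟨by linarith [hs.1], hsc⟩] at he
      have := brokenLine_injective hr hw hhw
        (fun hww => hfix w (sub_left_injective hww).symm) he
      linarith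
    · have hmem : s + c - 1 ∈ Set.Ioo (0 : ℝ) 1 := ⟨by linarith, by linarith [hs.2]⟩
      refine hfree _ (hball _ hmem) ?_
      rw [← hsemi.eq, sub_add_cancel, ← he]
      exact hball s ⟨by linarith, hs.2⟩
  · rw [hγg ⟨by norm_num, by norm_num⟩, brokenLine_of_le le_rfl]
    norm_num

lemma IsTranslationLine.exists_minimal_return {X : Type*} [TopologicalSpace X] [T2Space X]
    {h : X → X} (hinj : Function.Injective h) {γ : ℝ → X} (hγ : IsTranslationLine h γ)
    {t₀ c : ℝ} (hc : 0 < c) (hret : γ t₀ = γ (t₀ + c)) :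
    ∃ τ > 1, (∃ a, γ (a + τ) = γ a) ∧ ∀ p ∈ chordStrip τ, γ p.1 ≠ γ p.2 := by
  have hγc := hγ.continuous
  have hlag {s c : ℝ} (hc : 0 < c) (he : γ s = γ (s + c)) : 1 < c := by
    by_contra! hle
    exact hγ.ne_of_sub_le_one s (s + c) (by simpa) (by simpa) he
  set K : Set (ℝ × ℝ) := Set.Icc 0 1 ×ˢ Set.Icc 1 c ∩ {p | γ p.1 = γ (p.1 + p.2)}
  have hKcomp : IsCompact K := (isCompact_Icc.prod isCompact_Icc).inter_right
    (isClosed_eq (by fun_prop) (by fun_prop))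
  have hKmem {s c' : ℝ} (hc' : 0 < c') (hle : c' ≤ c) (he : γ s = γ (s + c')) :
      ∃ a, (a, c') ∈ K := by
    by_contra! hnot
    refine ne_of_forall_mem_Ico_ne hγ.semiconj hinj (fun a ha hea => hnot a ?_) s he
    exact ⟨⟨Set.Ico_subset_Icc_self ha, (hlag hc' he).le, hle⟩, hea⟩
  obtain ⟨a₀, ha₀⟩ := hKmem hc le_rfl hret
  obtain ⟨⟨a, τ⟩, ⟨⟨-, hτ1, hτc⟩, haτ⟩, hmin⟩ :=
    hKcomp.exists_isMinOn ⟨_, ha₀⟩ continuous_snd.continuousOn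
  refine ⟨τ, hlag (one_pos.trans_le hτ1) haτ, ⟨a, haτ.symm⟩, ?_⟩
  rintro ⟨s, t⟩ ⟨hpos, hlt⟩ he
  rw [← add_sub_cancel s t] at he
  obtain ⟨b, hb⟩ := hKmem hpos (hlt.le.trans hτc) he
  exact (hmin hb).not_gt hlt

theorem OrientationPreserving.iterate_apply_ne {h : ℂ ≃ₜ ℂ} (hh : OrientationPreserving h)
    (hfix : ∀ z, h z ≠ z) {n : ℕ} (hn : 1 ≤ n) (x : ℂ) : h^[n] x ≠ x := by
  intro hx
  obtain ⟨γ, hγ, hγx⟩ := exists_isTranslationLine h hfix x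
  have hret : γ (1 / 2) = γ (1 / 2 + n) := by
    rw [apply_add_natCast_of_semiconj hγ.semiconj, hγx, hx]
  obtain ⟨τ, hτ, ⟨a, ha⟩, hinj⟩ := hγ.exists_minimal_return h.injective (by positivity) hret
  exact hh.apply_add_ne_of_translationLine h.continuous hfix hγ.continuous hγ.semiconj hτ hinj ha

end TranslationLine

section Push

variable {E : Type*} [NormedAddCommGroup E] [NormedSpace ℝ E]

lemma exists_homeomorph_coe_eq_id_add [CompleteSpace E] {u : E → E} {κ : NNReal}
    (hu : LipschitzWith κ u) (hκ : κ < 1) : ∃ φ : E ≃ₜ E, ⇑φ = fun z => z + u z := by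
  have happrox : ApproximatesLinearOn (fun z => z + u z)
      (ContinuousLinearEquiv.refl ℝ E : E →L[ℝ] E) Set.univ κ := by
    intro z _ w _
    simpa [add_sub_add_comm, dist_eq_norm] using hu.dist_le_mul z w
  refine ⟨happrox.toHomeomorph _ ?_, rfl⟩
  rcases subsingleton_or_nontrivial E with hE | hE
  · exact Or.inl hE
  · exact Or.inr (hκ.trans_eq (by simp))

lemma orientationPreserving_id_add {u : ℂ → ℂ} {κ : NNReal} (hu : LipschitzWith κ u)
    (hκ : κ < 1) : OrientationPreserving fun z => z + u z := by
  have hslit : ∀ z w, z ≠ w → (z + u z - (w + u w)) / (z - w) ∈ Complex.slitPlane := by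
    intro z w hzw
    have hpos : 0 < ‖z - w‖ := norm_pos_iff.2 (sub_ne_zero.2 hzw)
    have hlip : ‖u z - u w‖ < ‖z - w‖ := by
      rw [← dist_eq_norm, ← dist_eq_norm] at *
      exact (hu.dist_le_mul z w).trans_lt (mul_lt_of_lt_one_left hpos (by exact_mod_cast hκ))
    rw [add_sub_add_comm, add_div, div_self (sub_ne_zero.2 hzw)]
    apply Complex.mem_slitPlane_of_norm_lt_one
    rwa [norm_div, div_lt_one hpos]
  have huc := hu.continuous
  refine ⟨fun p => Complex.log ((p.1 + u p.1 - (p.2 + u p.2)) / (p.1 - p.2)), ?_, ?_⟩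
  · refine ContinuousOn.clog ?_ fun p hp => hslit _ _ hp
    exact ContinuousOn.div (by fun_prop) (by fun_prop) fun p hp => sub_ne_zero.2 hp
  · intro z w hzw
    rw [Complex.exp_log (Complex.slitPlane_ne_zero (hslit z w hzw)),
      div_mul_cancel₀ _ (sub_ne_zero.2 hzw)]

lemma lipschitzWith_cone_smul (c v : E) {r : ℝ} (hr : 0 < r) :
    LipschitzWith (‖v‖ / r).toNNReal fun z => max 0 (1 - ‖z - c‖ / r) • v := by
  refine LipschitzWith.of_dist_le_mul fun z w => ?_
  have hcone : |max 0 (1 - ‖z - c‖ / r) - max 0 (1 - ‖w - c‖ / r)| ≤ dist z w / r := calc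
    _ ≤ |(1 - ‖z - c‖ / r) - (1 - ‖w - c‖ / r)| := by
        rw [max_comm 0, max_comm 0]
        exact abs_max_sub_max_le_abs _ _ 0
    _ = |‖z - c‖ - ‖w - c‖| / r := by
        rw [sub_sub_sub_cancel_left, ← sub_div, abs_div, abs_of_pos hr, abs_sub_comm]
    _ ≤ dist z w / r := by
        gcongr
        simpa [dist_eq_norm] using abs_norm_sub_norm_le (z - c) (w - c)
  rw [dist_eq_norm, ← sub_smul, norm_smul, Real.norm_eq_abs, Real.coe_toNNReal _ (by positivity)]
  calc _ ≤ dist z w / r * ‖v‖ := by gcongr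
    _ = ‖v‖ / r * dist z w := by ring

lemma exists_push_center {a c : ℂ} {r : ℝ} (ha : a ∈ Metric.ball c r) :
    ∃ φ : ℂ ≃ₜ ℂ, OrientationPreserving φ ∧ φ c = a ∧ Set.EqOn φ id (Metric.ball c r)ᶜ := by
  have hr : 0 < r := Metric.pos_of_mem_ball ha
  have hκ : (‖a - c‖ / r).toNNReal < 1 := by
    rwa [Real.toNNReal_lt_one, div_lt_one hr, ← dist_eq_norm]
  have hlip := lipschitzWith_cone_smul c (a - c) hr
  obtain ⟨φ, hφ⟩ := exists_homeomorph_coe_eq_id_add hlip hκ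
  refine ⟨φ, hφ ▸ orientationPreserving_id_add hlip hκ, by simp [hφ], fun z hz => ?_⟩
  have : 1 ≤ ‖z - c‖ / r := by
    rw [one_le_div hr, ← dist_eq_norm]
    simpa using hz
  simp [hφ, this]

lemma exists_push {a b c : ℂ} {r : ℝ} (ha : a ∈ Metric.ball c r) (hb : b ∈ Metric.ball c r) :
    ∃ φ : ℂ ≃ₜ ℂ, OrientationPreserving φ ∧ φ b = a ∧ Set.EqOn φ id (Metric.ball c r)ᶜ := by
  obtain ⟨α, hα, hαc, hαid⟩ := exists_push_center ha
  obtain ⟨β, hβ, hβc, hβid⟩ := exists_push_center hb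
  refine ⟨β.symm.trans α, hα.comp hβ.symm β.symm.continuous β.symm.injective, ?_, fun z hz => ?_⟩
  · simp [← hβc, hαc]
  · have hβz : β.symm z = z := β.symm_apply_eq.2 (hβid hz).symm
    simp [hβz, hαid hz]

end Push

section Wandering

/-- `x` has a neighbourhood to which no orbit starting in it returns. -/
def IsWandering {X : Type*} [TopologicalSpace X] (f : X → X) (x : X) : Prop :=
  ∃ U ∈ 𝓝 x, ∀ y ∈ U, ∀ n, 1 ≤ n → f^[n] y ∉ U

lemma IsWandering.of_semiconj {X Y : Type*} [TopologicalSpace X] [TopologicalSpace Y]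
    {e : X → Y} {f : X → X} {g : Y → Y} (hsemi : Function.Semiconj e f g) {x : X}
    (he : ContinuousAt e x) (hg : IsWandering g (e x)) : IsWandering f x := by
  obtain ⟨U, hU, hret⟩ := hg
  refine ⟨e ⁻¹' U, he hU, fun y hy n hn hny => hret (e y) hy n hn ?_⟩
  rwa [← (hsemi.iterate_right n).eq]

lemma exists_ball_free {X : Type*} [MetricSpace X] {f : X → X} {x : X} (hf : ContinuousAt f x)
    (hfix : f x ≠ x) : ∃ r > 0, ∀ y ∈ Metric.ball x r, f y ∉ Metric.ball x r := by
  obtain ⟨U, V, hU, hV, hUV⟩ := t2_separation_nhds hfix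
  obtain ⟨r, hr, hball⟩ := Metric.mem_nhds_iff.1 (Filter.inter_mem hV (hf hU))
  exact ⟨r, hr, fun y hy hfy => hUV.le_bot ⟨(hball hy).2, (hball hfy).1⟩⟩

variable {X : Type*} {h φ : X → X} {B : Set X}

lemma comp_apply_ne_of_eqOn_compl (hφ : Function.Injective φ) (hφB : Set.EqOn φ id Bᶜ)
    (hB : ∀ z ∈ B, h z ∉ B) (hfix : ∀ z, h z ≠ z) (z : X) : (φ ∘ h) z ≠ z := by
  intro hz
  rw [Function.comp_apply] at hz
  by_cases hhz : h z ∈ B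
  · by_cases hzB : z ∈ B
    · exact hB z hzB hhz
    · exact hfix z (hφ (hz.trans (hφB hzB).symm))
  · exact hfix z ((hφB hhz).symm.trans hz)

lemma iterate_comp_of_first_return (hφB : Set.EqOn φ id Bᶜ) {x : X} (k : ℕ)
    (hfirst : ∀ j < k, h^[j + 1] x ∉ B) : (φ ∘ h)^[k + 1] x = φ (h^[k + 1] x) := by
  induction k with
  | zero => rfl
  | succ k ih =>
    rw [Function.iterate_succ_apply', ih fun j hj => hfirst j (hj.trans k.lt_succ_self),
      hφB (hfirst k k.lt_succ_self), Function.iterate_succ_apply' h (k + 1)]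
    rfl

/-- Franks' argument: if some orbit left and re-entered a small free disc, closing it up by a
push inside the disc would create a periodic orbit without creating fixed points. -/
theorem OrientationPreserving.isWandering {h : ℂ ≃ₜ ℂ} (hh : OrientationPreserving h)
    (hfix : ∀ z, h z ≠ z) (c : ℂ) : IsWandering h c := by
  classical
  obtain ⟨r, hr, hfree⟩ := exists_ball_free h.continuous.continuousAt (hfix c)
  refine ⟨Metric.ball c r, Metric.ball_mem_nhds c hr, fun x hx n hn hnx => ?_⟩
  have hret : ∃ k, h^[k + 1] x ∈ Metric.ball c r := ⟨n - 1, by rwa [Nat.sub_add_cancel hn]⟩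
  obtain ⟨φ, hφ, hφx, hφid⟩ := exists_push hx (Nat.find_spec hret)
  refine OrientationPreserving.iterate_apply_ne (h := h.trans φ)
    (hφ.comp hh h.continuous h.injective)
    (comp_apply_ne_of_eqOn_compl (φ := φ) φ.injective hφid hfree hfix)
    (Nat.le_add_left 1 (Nat.find hret)) x ?_
  exact (iterate_comp_of_first_return hφid _ fun j hj => Nat.find_min hret hj).trans hφx

theorem isWandering_comp_self (F : (ℝ × ℝ) ≃ₜ (ℝ × ℝ)) (hfix : ∀ z, F (F z) ≠ z) (x : ℝ × ℝ) :
    IsWandering (F ∘ F) x := by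
  let e : (ℝ × ℝ) ≃ₜ ℂ := Complex.equivRealProdCLM.symm.toHomeomorph
  let h : ℂ ≃ₜ ℂ := (e.symm.trans F).trans e
  have hsemi : Function.Semiconj e (F ∘ F) (h ∘ h) := fun z => by simp [h]
  refine IsWandering.of_semiconj hsemi e.continuous.continuousAt ?_
  refine OrientationPreserving.isWandering (h := h.trans h) (orientationPreserving_comp_self h)
    (fun z hz => hfix (e.symm z) ?_) (e x)
  simpa [h, ← e.eq_symm_apply] using hz

end Wandering

section LogIncrement

open Complex

/-- Along `c|[0, 1]` a continuous logarithm of `c` increases by `δ`; for a closed curve, `δ` is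
`2πi` times its winding number around `0`. -/
def HasLogIncrement (c : ℝ → ℂ) (δ : ℂ) : Prop :=
  ∃ l : ℝ → ℂ, Continuous l ∧ (∀ s, exp (l s) = c s) ∧ l 1 - l 0 = δ

variable {c : ℝ → ℂ} {p δ δ' : ℂ}

lemma HasLogIncrement.unique (h : HasLogIncrement c δ) (h' : HasLogIncrement c δ') : δ = δ' := by
  obtain ⟨l, hl, hexp, rfl⟩ := h
  obtain ⟨l', hl', hexp', rfl⟩ := h'
  have hconst : l 1 - l' 1 = l 0 - l' 0 :=
    eq_of_isPreconnected_of_exp_eq_one (u := fun s => l s - l' s) isPreconnected_univ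
      (by fun_prop)
      (fun s _ => by rw [exp_sub, hexp, hexp', div_self (hexp' s ▸ exp_ne_zero _)]) trivial trivial
  linear_combination hconst

lemma HasLogIncrement.mul {c' : ℝ → ℂ} (h : HasLogIncrement c δ) (h' : HasLogIncrement c' δ') :
    HasLogIncrement (fun s => c s * c' s) (δ + δ') := by
  obtain ⟨l, hl, hexp, rfl⟩ := h
  obtain ⟨l', hl', hexp', rfl⟩ := h'
  exact ⟨fun s => l s + l' s, by fun_prop, fun s => by rw [exp_add, hexp, hexp'], by ring⟩

lemma hasLogIncrement_const (hp : p ≠ 0) : HasLogIncrement (fun _ => p) 0 :=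
  ⟨fun _ => log p, continuous_const, fun _ => exp_log hp, sub_self _⟩

lemma hasLogIncrement_of_mem_slitPlane (hc : Continuous c) (hslit : ∀ s, c s ∈ slitPlane)
    (hclosed : c 1 = c 0) : HasLogIncrement c 0 :=
  ⟨fun s => log (c s), hc.clog hslit, fun s => exp_log (slitPlane_ne_zero (hslit s)),
    sub_eq_zero.2 (congrArg log hclosed)⟩

lemma one_sub_mem_slitPlane {z : ℂ} (hz : ‖z‖ < 1) : 1 - z ∈ slitPlane := by
  rw [sub_eq_add_neg]
  exact mem_slitPlane_of_norm_lt_one (by rwa [norm_neg])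

lemma HasLogIncrement.sub_const (h : HasLogIncrement c δ) (hc : Continuous c)
    (hclosed : c 1 = c 0) (hp : ∀ s, ‖p‖ < ‖c s‖) : HasLogIncrement (fun s => c s - p) δ := by
  have hne (s) : c s ≠ 0 := norm_pos_iff.1 ((norm_nonneg p).trans_lt (hp s))
  have hfactor : HasLogIncrement (fun s => 1 - p / c s) 0 := by
    refine hasLogIncrement_of_mem_slitPlane (continuous_const.sub (continuous_const.div hc hne))
      (fun s => one_sub_mem_slitPlane ?_) (by rw [hclosed])
    rw [norm_div, div_lt_one (norm_pos_iff.2 (hne s))]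
    exact hp s
  simpa [mul_sub, mul_div_cancel₀ _ (hne _)] using h.mul hfactor

lemma hasLogIncrement_sub_const_of_norm_lt (hc : Continuous c) (hclosed : c 1 = c 0)
    (hp : ∀ s, ‖c s‖ < ‖p‖) : HasLogIncrement (fun s => c s - p) 0 := by
  have hp0 : p ≠ 0 := norm_pos_iff.1 ((norm_nonneg (c 0)).trans_lt (hp 0))
  have hfactor : HasLogIncrement (fun s => 1 - c s / p) 0 := by
    refine hasLogIncrement_of_mem_slitPlane (by fun_prop) (fun s => one_sub_mem_slitPlane ?_)
      (by rw [hclosed])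
    rw [norm_div, div_lt_one (norm_pos_iff.2 hp0)]
    exact hp s
  simpa [mul_sub, mul_div_cancel₀ _ hp0, neg_add_eq_sub] using
    (hasLogIncrement_const (neg_ne_zero.2 hp0)).mul hfactor

lemma exists_forall_hasLogIncrement {H : ℝ × ℝ → ℂ} (hH : Continuous H) (hne : ∀ p, H p ≠ 0)
    (hclosed : ∀ t, H (1, t) = H (0, t)) : ∃ δ, ∀ t, HasLogIncrement (fun s => H (s, t)) δ := by
  obtain ⟨l, hl, hexp⟩ := exists_continuous_exp_eq hH hne
  refine ⟨l (1, 0) - l (0, 0), fun t => ⟨fun s => l (s, t), by fun_prop, fun s => hexp _, ?_⟩⟩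
  refine eq_of_isPreconnected_of_exp_eq_one (u := fun t => l (1, t) - l (0, t))
    isPreconnected_univ (by fun_prop) (fun t _ => ?_) trivial trivial
  rw [exp_sub, hexp, hexp, hclosed, div_self (hne _)]

theorem exists_eq_of_hasLogIncrement_ne_zero {σ : ℝ → ℂ} (h : HasLogIncrement c δ) (hδ : δ ≠ 0)
    (hc : Continuous c) (hclosed : c 1 = c 0) (hσ : Continuous σ) (h0 : ∀ s, ‖σ 0‖ < ‖c s‖)
    (h1 : ∀ s, ‖c s‖ < ‖σ 1‖) : ∃ s t, c s = σ t := by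
  by_contra! hne
  obtain ⟨ε, hε⟩ := exists_forall_hasLogIncrement (H := fun p => c p.1 - σ p.2) (by fun_prop)
    (fun p => sub_ne_zero.2 (hne _ _)) fun t => by rw [hclosed]
  have hε0 : ε = δ := (hε 0).unique (h.sub_const hc hclosed h0)
  have hε1 : ε = 0 := (hε 1).unique (hasLogIncrement_sub_const_of_norm_lt hc hclosed h1)
  exact hδ (hε0.symm.trans hε1)

end LogIncrement

section Annulus

lemma isOpenQuotientMap_projA : IsOpenQuotientMap projA :=
  QuotientAddGroup.isOpenQuotientMap_mk.prodMap IsOpenQuotientMap.id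

lemma projA_eq_projA_iff {z w : ℝ × ℝ} : projA z = projA w ↔ ∃ k : ℤ, w = z + ((k : ℝ), 0) := by
  have hfst : (z.1 : AddCircle (1 : ℝ)) = w.1 ↔ ∃ k : ℤ, w.1 = z.1 + k := by
    rw [eq_comm, ← sub_eq_zero, ← AddCircle.coe_sub, AddCircle.coe_eq_zero_iff]
    simp only [zsmul_one, eq_comm (b := w.1 - z.1), sub_eq_iff_eq_add']
  simp only [projA, Prod.ext_iff, hfst, Prod.fst_add, Prod.snd_add, add_zero, exists_and_right,
    eq_comm (a := w.2)]

lemma projA_add_intCast (z : ℝ × ℝ) (k : ℤ) : projA (z + ((k : ℝ), 0)) = projA z :=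
  (projA_eq_projA_iff.2 ⟨k, rfl⟩).symm

/-- The embedding of the annulus onto the punctured plane in which `(x, y)` has argument `2πx`
and modulus `exp (2πy)`. -/
def annToPlane (q : Ann) : ℂ := Real.exp (2 * Real.pi * q.2) * AddCircle.toCircle q.1

lemma continuous_annToPlane : Continuous annToPlane := by
  have : Continuous fun q : Ann => (AddCircle.toCircle q.1 : ℂ) :=
    continuous_subtype_val.comp (AddCircle.continuous_toCircle.comp continuous_fst)
  unfold annToPlane
  fun_prop

lemma norm_annToPlane (q : Ann) : ‖annToPlane q‖ = Real.exp (2 * Real.pi * q.2) := by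
  rw [annToPlane, norm_mul, Circle.norm_coe, mul_one, Complex.norm_of_nonneg (Real.exp_nonneg _)]

lemma norm_annToPlane_lt_iff {q q' : Ann} : ‖annToPlane q‖ < ‖annToPlane q'‖ ↔ q.2 < q'.2 := by
  rw [norm_annToPlane, norm_annToPlane, Real.exp_lt_exp,
    mul_lt_mul_iff_right₀ Real.two_pi_pos]

lemma annToPlane_injective : Function.Injective annToPlane := by
  intro q q' h
  have h2 : q.2 = q'.2 := by
    refine le_antisymm ?_ ?_ <;> rw [← not_lt, ← norm_annToPlane_lt_iff, h] <;> exact lt_irrefl _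
  rw [annToPlane, annToPlane, h2] at h
  have h1 := mul_left_cancel₀ (by exact_mod_cast Real.exp_ne_zero _) h
  exact Prod.ext (AddCircle.injective_toCircle one_ne_zero (Subtype.ext h1)) h2

lemma annToPlane_projA (z : ℝ × ℝ) :
    annToPlane (projA z) = Complex.exp (2 * Real.pi * (z.2 + z.1 * Complex.I)) := by
  rw [annToPlane, projA, AddCircle.toCircle_apply_mk, Circle.coe_exp, Complex.ofReal_exp,
    ← Complex.exp_add]
  push_cast
  ring_nf

lemma hasLogIncrement_annToPlane_projA {γ : ℝ → ℝ × ℝ} (hγ : Continuous γ) {k : ℤ}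
    (hk : γ 1 = γ 0 + ((k : ℝ), 0)) :
    HasLogIncrement (fun s => annToPlane (projA (γ s))) (2 * Real.pi * (k * Complex.I)) := by
  refine ⟨fun s => 2 * Real.pi * ((γ s).2 + (γ s).1 * Complex.I), by fun_prop,
    fun s => (annToPlane_projA _).symm, ?_⟩
  simp only [hk, Prod.snd_add, Prod.fst_add, add_zero]
  push_cast
  ring

lemma joinedIn_connectedComponentIn {U : Set Ann} (hU : IsOpen U) {x p q : Ann}
    (hp : p ∈ connectedComponentIn U x) (hq : q ∈ connectedComponentIn U x) :
    JoinedIn (connectedComponentIn U x) p q := by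
  have : LocallyPathConnectedSpace Ann :=
    isOpenQuotientMap_projA.isQuotientMap.locallyPathConnectedSpace
  have hconn : IsConnected (connectedComponentIn U x) :=
    ⟨⟨p, hp⟩, isPreconnected_connectedComponentIn⟩
  exact (hU.connectedComponentIn.isConnected_iff_isPathConnected.1 hconn).joinedIn p hp q hq

/-- The part over `[0, 1]` of `γ` lifts a closed curve in `Γ ⊆ 𝔸` that winds a nonzero number of
times around the annulus. -/
structure IsEssentialLoopLift (Γ : Set Ann) (γ : ℝ → ℝ × ℝ) : Prop where
  mapsTo : Set.MapsTo (fun t => projA (γ t)) (Set.Icc 0 1) Γ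
  displacement : ∃ k : ℤ, k ≠ 0 ∧ γ 1 = γ 0 + ((k : ℝ), 0)

theorem IsEssentialLoopLift.essentialA {Γ : Set Ann} (hΓ : IsCompact Γ) {γ : ℝ → ℝ × ℝ}
    (hγ : Continuous γ) (hloop : IsEssentialLoopLift Γ γ) : EssentialA Γ := by
  rintro x - ⟨habove, hbelow⟩
  obtain ⟨k, hk, hγk⟩ := hloop.displacement
  obtain ⟨A, hA⟩ := (hΓ.image continuous_snd).bddAbove
  obtain ⟨B, hB⟩ := (hΓ.image continuous_snd).bddBelow
  obtain ⟨_, ⟨q₁, hq₁, rfl⟩, hA₁⟩ := not_bddAbove_iff.1 habove A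
  obtain ⟨_, ⟨q₀, hq₀, rfl⟩, hB₀⟩ := not_bddBelow_iff.1 hbelow B
  obtain ⟨σ, hσ⟩ := joinedIn_connectedComponentIn hΓ.isClosed.isOpen_compl hq₀ hq₁
  let γ' (s : ℝ) : ℝ × ℝ := γ (Set.projIcc 0 1 zero_le_one s)
  have hγ' : Continuous γ' := hγ.comp (continuous_subtype_val.comp continuous_projIcc)
  have hγ'Γ (s : ℝ) : projA (γ' s) ∈ Γ := hloop.mapsTo (Subtype.prop _)
  have hγ'k : γ' 1 = γ' 0 + ((k : ℝ), 0) := by simpa [γ'] using hγk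
  obtain ⟨s, t, hst⟩ := exists_eq_of_hasLogIncrement_ne_zero (σ := annToPlane ∘ σ.extend)
    (hasLogIncrement_annToPlane_projA hγ' hγ'k) (by simp [hk, Real.pi_ne_zero])
    (continuous_annToPlane.comp (isOpenQuotientMap_projA.continuous.comp hγ'))
    (by rw [hγ'k, projA_add_intCast]) (continuous_annToPlane.comp σ.continuous_extend)
    (fun s => by simpa [norm_annToPlane_lt_iff] using hB₀.trans_le (hB ⟨_, hγ'Γ s, rfl⟩))
    (fun s => by simpa [norm_annToPlane_lt_iff] using (hA ⟨_, hγ'Γ s, rfl⟩).trans_lt hA₁)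
  have hmeet : projA (γ' s) = σ.extend t := annToPlane_injective hst
  exact connectedComponentIn_subset _ _ (hσ _) (hmeet ▸ hγ'Γ s)

end Annulus

section LipschitzPath

open scoped NNReal

variable {E : Type*} [SeminormedAddCommGroup E] {K : ℝ≥0} {γ γ₁ γ₂ : ℝ → E}

lemma lipschitzWith_apply_min_add_apply_max (h₁ : LipschitzWith K γ₁) (h₂ : LipschitzWith K γ₂)
    (c : ℝ) : LipschitzWith K fun t => γ₁ (min t c) + γ₂ (max t c) := by
  refine LipschitzWith.of_dist_le_mul fun a b => ?_
  have hsplit : dist (min a c) (min b c) + dist (max a c) (max b c) = dist a b := by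
    simp only [Real.dist_eq]
    grind
  calc dist (γ₁ (min a c) + γ₂ (max a c)) (γ₁ (min b c) + γ₂ (max b c))
      ≤ dist (γ₁ (min a c)) (γ₁ (min b c)) + dist (γ₂ (max a c)) (γ₂ (max b c)) :=
        dist_add_add_le _ _ _ _
    _ ≤ K * dist (min a c) (min b c) + K * dist (max a c) (max b c) :=
        add_le_add (h₁.dist_le_mul _ _) (h₂.dist_le_mul _ _)
    _ = K * dist a b := by rw [← mul_add, hsplit]

lemma lipschitzWith_apply_add_sub_const (h : LipschitzWith K γ) (d : ℝ) (p : E) :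
    LipschitzWith K fun t => γ (t + d) - p := by
  refine LipschitzWith.of_dist_le_mul fun a b => ?_
  simpa only [dist_sub_right, dist_add_right] using h.dist_le_mul (a + d) (b + d)

/-- `z` and `w` are joined by a Lipschitz path inside `O`. -/
def LipschitzJoinedIn (O : Set E) (z w : E) : Prop :=
  ∃ (K : ℝ≥0) (γ : ℝ → E),
    LipschitzWith K γ ∧ γ 0 = z ∧ γ 1 = w ∧ Set.MapsTo γ (Set.Icc 0 1) O

lemma LipschitzJoinedIn.trans {O : Set E} {z w v : E} (hzw : LipschitzJoinedIn O z w)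
    (hwv : LipschitzJoinedIn O w v) : LipschitzJoinedIn O z v := by
  obtain ⟨K₁, γ₁, h₁, rfl, rfl, hO₁⟩ := hzw
  obtain ⟨K₂, γ₂, h₂, h₂0, rfl, hO₂⟩ := hwv
  refine ⟨_, fun t => γ₁ (min (2 * t) 1) + (γ₂ (max (2 * t) 1 + -1) - γ₁ 1),
    (lipschitzWith_apply_min_add_apply_max (h₁.weaken (le_max_left K₁ K₂))
      (lipschitzWith_apply_add_sub_const (h₂.weaken (le_max_right K₁ K₂)) (-1) (γ₁ 1)) 1).comp
      (lipschitzWith_smul (2 : ℝ)), by simp [h₂0], by norm_num, fun t ht => ?_⟩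
  rcases le_total (2 * t) 1 with hle | hge
  · simpa [min_eq_left hle, max_eq_right hle, h₂0] using hO₁ ⟨by linarith [ht.1], hle⟩
  · simpa [min_eq_right hge, max_eq_left hge] using
      hO₂ (x := 2 * t + -1) ⟨by linarith, by linarith [ht.2]⟩

lemma lipschitzJoinedIn_of_convex {E : Type*} [NormedAddCommGroup E] [NormedSpace ℝ E] {O : Set E}
    (hO : Convex ℝ O) {z w : E} (hz : z ∈ O) (hw : w ∈ O) : LipschitzJoinedIn O z w :=
  ⟨_, AffineMap.lineMap z w, lipschitzWith_lineMap z w, AffineMap.lineMap_apply_zero _ _,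
    AffineMap.lineMap_apply_one _ _, fun _ ht => hO.lineMap_mem hz hw ht⟩

lemma LipschitzJoinedIn.mono {O O' : Set E} (hO : O ⊆ O') {z w : E}
    (h : LipschitzJoinedIn O z w) : LipschitzJoinedIn O' z w :=
  let ⟨K, γ, hγ, h0, h1, hm⟩ := h
  ⟨K, γ, hγ, h0, h1, hm.mono_right hO⟩

theorem lipschitzJoinedIn_of_mem_connectedComponentIn {E : Type*} [NormedAddCommGroup E]
    [NormedSpace ℝ E] {O : Set E} (hO : IsOpen O) {z w : E} (hw : w ∈ connectedComponentIn O z) :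
    LipschitzJoinedIn O z w := by
  have hz : z ∈ O := connectedComponentIn_nonempty_iff.1 ⟨w, hw⟩
  refine isPreconnected_connectedComponentIn.induction₂' (LipschitzJoinedIn O) (fun x hx => ?_)
    (fun _ _ _ _ _ _ => LipschitzJoinedIn.trans) (mem_connectedComponentIn hz) hw
  obtain ⟨r, hr, hball⟩ := Metric.isOpen_iff.1 hO x (connectedComponentIn_subset _ _ hx)
  filter_upwards [mem_nhdsWithin_of_mem_nhds (Metric.ball_mem_nhds x hr)] with y hy
  have hx := Metric.mem_ball_self (x := x) hr
  exact ⟨(lipschitzJoinedIn_of_convex (convex_ball x r) hx hy).mono hball,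
    (lipschitzJoinedIn_of_convex (convex_ball x r) hy hx).mono hball⟩

/-- For `γ s = γ t`, the path over `[0, 1]` that runs through `γ|[0, 1]` without `γ|[s, t]`, at the
speed of `γ` times `1 - (t - s)`. -/
def excise (γ : ℝ → E) (s t u : ℝ) : E :=
  γ (min ((1 - (t - s)) * u) s) + (γ (max ((1 - (t - s)) * u) s + (t - s)) - γ t)

lemma lipschitzWith_excise (hγ : LipschitzWith K γ) (s t : ℝ) :
    LipschitzWith (K * ‖1 - (t - s)‖₊) (excise γ s t) :=
  (lipschitzWith_apply_min_add_apply_max hγ (lipschitzWith_apply_add_sub_const hγ (t - s) (γ t))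
    s).comp (lipschitzWith_smul (1 - (t - s)))

variable {s t : ℝ}

lemma excise_apply_of_le {u : ℝ} (hu : (1 - (t - s)) * u ≤ s) :
    excise γ s t u = γ ((1 - (t - s)) * u) := by
  simp [excise, min_eq_left hu, max_eq_right hu]

lemma excise_apply_of_ge (hst : γ s = γ t) {u : ℝ} (hu : s ≤ (1 - (t - s)) * u) :
    excise γ s t u = γ ((1 - (t - s)) * u + (t - s)) := by
  simp [excise, min_eq_right hu, max_eq_left hu, hst]

lemma excise_zero (hs : 0 ≤ s) : excise γ s t 0 = γ 0 := by
  rw [excise_apply_of_le (by simpa), mul_zero]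

lemma excise_one (hst : γ s = γ t) (ht : t ≤ 1) : excise γ s t 1 = γ 1 := by
  rw [excise_apply_of_ge hst (by linarith), mul_one, sub_add_cancel]

lemma exists_mem_Icc_excise_eq (hst : γ s = γ t) (hle : s ≤ t) (hlen : t - s ≤ 1) {u : ℝ}
    (hu : u ∈ Set.Icc (0 : ℝ) 1) : ∃ v ∈ Set.Icc (0 : ℝ) 1, excise γ s t u = γ v := by
  have hnonneg : 0 ≤ (1 - (t - s)) * u := mul_nonneg (by linarith) hu.1
  have hupper : (1 - (t - s)) * u ≤ 1 - (t - s) := mul_le_of_le_one_right (by linarith) hu.2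
  rcases le_total ((1 - (t - s)) * u) s with h | h
  · exact ⟨_, ⟨hnonneg, by linarith⟩, excise_apply_of_le h⟩
  · exact ⟨_, ⟨by linarith, by linarith⟩, excise_apply_of_ge hst h⟩

end LipschitzPath

section ShortestLoop

open scoped NNReal

variable {P : Set Ann} {γ : ℝ → ℝ × ℝ} {s t : ℝ}

lemma IsEssentialLoopLift.add_intCast (h : IsEssentialLoopLift P γ) (m : ℤ) :
    IsEssentialLoopLift P fun u => γ u + ((m : ℝ), 0) := by
  obtain ⟨k, hk, hγk⟩ := h.displacement
  exact ⟨fun u hu => by simpa only [projA_add_intCast] using h.mapsTo hu,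
    k, hk, by rw [hγk, add_right_comm]⟩

lemma IsEssentialLoopLift.excise (h : IsEssentialLoopLift P γ) (hs : 0 ≤ s) (hst : s ≤ t)
    (ht : t ≤ 1) (heq : γ s = γ t) : IsEssentialLoopLift P (excise γ s t) := by
  refine ⟨fun u hu => ?_, by simpa only [excise_zero hs, excise_one heq ht] using h.displacement⟩
  obtain ⟨v, hv, huv⟩ := exists_mem_Icc_excise_eq heq hst (by linarith) hu
  simpa only [huv] using h.mapsTo hv

lemma IsEssentialLoopLift.subarc (h : IsEssentialLoopLift P γ) (hs : 0 ≤ s) (hst : s ≤ t)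
    (ht : t ≤ 1) {m : ℤ} (hm : m ≠ 0) (heq : γ t = γ s + ((m : ℝ), 0)) :
    IsEssentialLoopLift P fun u => γ ((t - s) * u + s) := by
  refine ⟨fun u hu => h.mapsTo ⟨?_, ?_⟩, m, hm, by simpa using heq⟩
  · exact add_nonneg (mul_nonneg (sub_nonneg.2 hst) hu.1) hs
  · linarith [mul_le_of_le_one_right (sub_nonneg.2 hst) hu.2]

lemma isClosed_setOf_isEssentialLoopLift (hP : IsClosed P) :
    IsClosed {γ | IsEssentialLoopLift P γ} := by
  let shifts : Set (ℝ × ℝ) := ((fun k : ℤ => (k : ℝ)) '' {k | k ≠ 0}) ×ˢ {0}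
  have hshifts : IsClosed shifts :=
    (Int.isClosedEmbedding_coe_real.isClosedMap _ (isClosed_discrete _)).prod isClosed_singleton
  have heq : {γ | IsEssentialLoopLift P γ} =
      (⋂ t ∈ Set.Icc (0 : ℝ) 1, {γ | projA (γ t) ∈ P}) ∩ {γ | γ 1 - γ 0 ∈ shifts} := by
    ext γ
    have hdisp : (∃ k : ℤ, k ≠ 0 ∧ γ 1 = γ 0 + ((k : ℝ), 0)) ↔ γ 1 - γ 0 ∈ shifts := by
      simp [shifts, Prod.ext_iff, eq_sub_iff_add_eq', eq_comm, ← and_assoc]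
    simp only [Set.mem_inter_iff, Set.mem_iInter, Set.mem_ofPred_eq, ← hdisp]
    exact ⟨fun h => ⟨h.mapsTo, h.displacement⟩, fun h => ⟨h.1, h.2⟩⟩
  rw [heq]
  exact (isClosed_biInter fun t _ => hP.preimage
    (isOpenQuotientMap_projA.continuous.comp (continuous_apply t))).inter
      (hshifts.preimage (by fun_prop))

/-- The lifts of essential loops in `P` with Lipschitz constant at most `C₀`, paired with a
Lipschitz constant and translated to start in `[0, 1] × ℝ`. -/
def normalizedLoopLifts (P : Set Ann) (C₀ : ℝ≥0) : Set (ℝ≥0 × (ℝ → ℝ × ℝ)) :=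
  {p | p.1 ∈ Set.Icc 0 C₀ ∧ LipschitzWith p.1 p.2 ∧ IsEssentialLoopLift P p.2 ∧
    (p.2 0).1 ∈ Set.Icc (0 : ℝ) 1}

lemma isClosed_normalizedLoopLifts (hP : IsClosed P) (C₀ : ℝ≥0) :
    IsClosed (normalizedLoopLifts P C₀) := by
  simp only [normalizedLoopLifts, Set.ofPred_and, lipschitzWith_iff_dist_le_mul, Set.ofPred_forall]
  refine (isClosed_Icc.preimage continuous_fst).inter (IsClosed.inter ?_ (IsClosed.inter
    ((isClosed_setOf_isEssentialLoopLift hP).preimage continuous_snd)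
    (isClosed_Icc.preimage (f := fun p : ℝ≥0 × (ℝ → ℝ × ℝ) => (p.2 0).1) (by fun_prop))))
  exact isClosed_iInter fun s => isClosed_iInter fun t => isClosed_le (by fun_prop) (by fun_prop)

lemma isCompact_normalizedLoopLifts (hP : IsCompact P) (C₀ : ℝ≥0) :
    IsCompact (normalizedLoopLifts P C₀) := by
  obtain ⟨M, hM⟩ := (hP.image continuous_snd).isBounded.exists_norm_le
  have hbox : IsCompact (Set.Icc 0 C₀ ×ˢ Set.univ.pi fun t : ℝ =>
      Metric.closedBall (0 : ℝ × ℝ) (C₀ * dist t 0 + max 1 M)) :=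
    isCompact_Icc.prod (isCompact_univ_pi fun t => isCompact_closedBall _ _)
  refine hbox.of_isClosed_subset (isClosed_normalizedLoopLifts hP.isClosed C₀) ?_
  rintro ⟨C, γ⟩ ⟨hC, hγ, hloop, hstart⟩
  have hstart_norm : ‖γ 0‖ ≤ max 1 M := by
    refine max_le_max ?_ (hM _ ⟨_, hloop.mapsTo (Set.left_mem_Icc.2 zero_le_one), rfl⟩)
    rw [Real.norm_of_nonneg hstart.1]
    exact hstart.2
  refine ⟨hC, fun t _ => mem_closedBall_zero_iff.2 ?_⟩
  calc ‖γ t‖ ≤ dist (γ t) (γ 0) + ‖γ 0‖ := by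
        simpa only [dist_zero_right] using dist_triangle (γ t) (γ 0) 0
    _ ≤ C₀ * dist t 0 + max 1 M :=
        add_le_add ((hγ.weaken hC.2).dist_le_mul t 0) hstart_norm

theorem exists_shortest_isEssentialLoopLift (hP : IsCompact P) {C₀ : ℝ≥0} {γ₀ : ℝ → ℝ × ℝ}
    (hγ₀ : LipschitzWith C₀ γ₀) (hloop₀ : IsEssentialLoopLift P γ₀) :
    ∃ C γ, LipschitzWith C γ ∧ IsEssentialLoopLift P γ ∧
      ∀ C' γ', LipschitzWith C' γ' → IsEssentialLoopLift P γ' → C ≤ C' := by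
  have mem_normalized {C' : ℝ≥0} {γ' : ℝ → ℝ × ℝ} (hγ' : LipschitzWith C' γ')
      (hloop' : IsEssentialLoopLift P γ') (hC' : C' ≤ C₀) :
      (C', fun u => γ' u + (((-⌊(γ' 0).1⌋ : ℤ) : ℝ), 0)) ∈ normalizedLoopLifts P C₀ := by
    refine ⟨⟨zero_le, hC'⟩, LipschitzWith.of_dist_le_mul fun a b => ?_, hloop'.add_intCast _, ?_⟩
    · simpa only [dist_add_right] using hγ'.dist_le_mul a b
    · simpa [← sub_eq_add_neg, Int.self_sub_floor] using (Int.fract_lt_one (γ' 0).1).le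
  obtain ⟨⟨C, γ⟩, ⟨hC, hγ, hloop, -⟩, hmin⟩ := (isCompact_normalizedLoopLifts hP C₀).exists_isMinOn
    ⟨_, mem_normalized hγ₀ hloop₀ le_rfl⟩ continuous_fst.continuousOn
  refine ⟨C, γ, hγ, hloop, fun C' γ' hγ' hloop' => ?_⟩
  rcases le_total C' C₀ with hC' | hC'
  · exact hmin (mem_normalized hγ' hloop' hC')
  · exact hC.2.trans hC'

lemma IsEssentialLoopLift.lipschitz_pos (h : IsEssentialLoopLift P γ) {C : ℝ≥0}
    (hγ : LipschitzWith C γ) : 0 < C := by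
  obtain ⟨k, hk, hγk⟩ := h.displacement
  by_contra hC
  have hdist := hγ.dist_le_mul 1 0
  rw [nonpos_iff_eq_zero.1 (not_lt.1 hC), NNReal.coe_zero, zero_mul, dist_le_zero, hγk] at hdist
  simp [Prod.ext_iff, hk] at hdist

theorem injOn_projA_of_shortest {C : ℝ≥0} (hγ : LipschitzWith C γ) (h : IsEssentialLoopLift P γ)
    (hmin : ∀ C' γ', LipschitzWith C' γ' → IsEssentialLoopLift P γ' → C ≤ C') :
    Set.InjOn (fun t => projA (γ t)) (Set.Ico 0 1) := by
  have not_shorter {a : ℝ} (ha : 0 ≤ a) (ha1 : a < 1) {γ' : ℝ → ℝ × ℝ}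
      (hγ' : LipschitzWith (C * ‖a‖₊) γ') (h' : IsEssentialLoopLift P γ') : False := by
    have ha1' : ‖a‖₊ < 1 := by rwa [← NNReal.coe_lt_coe, coe_nnnorm, Real.norm_of_nonneg ha]
    exact (mul_lt_of_lt_one_right (h.lipschitz_pos hγ) ha1').not_ge (hmin _ _ hγ' h')
  intro s hs t ht heq
  by_contra hne
  wlog hst : s < t generalizing s t
  · exact this ht hs heq.symm (Ne.symm hne) (lt_of_le_of_ne (not_lt.1 hst) (Ne.symm hne))
  obtain ⟨m, hm⟩ := projA_eq_projA_iff.1 heq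
  rcases eq_or_ne m 0 with rfl | hm0
  · have heq' : γ s = γ t := by simpa [Prod.mk_zero_zero] using hm.symm
    exact not_shorter (by linarith [ht.2, hs.1]) (by linarith) (lipschitzWith_excise hγ s t)
      (h.excise hs.1 hst.le ht.2.le heq')
  · refine not_shorter (a := t - s) (by linarith) (by linarith [ht.2, hs.1]) ?_
      (h.subarc hs.1 hst.le ht.2.le hm0 hm)
    simpa only [sub_zero, Function.comp_def, smul_eq_mul] using
      (lipschitzWith_apply_add_sub_const hγ s 0).comp (lipschitzWith_smul (t - s))

lemma exists_isEmbedding_range_eq_image {X : Type*} [TopologicalSpace X] [T2Space X] {c : ℝ → X}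
    (hc : ContinuousOn c (Set.Icc 0 1)) (hclosed : c 0 = c 1) (hinj : Set.InjOn c (Set.Ico 0 1)) :
    ∃ e : AddCircle (1 : ℝ) → X, IsEmbedding e ∧ Set.range e = c '' Set.Icc 0 1 := by
  have he : Continuous (AddCircle.liftIco 1 0 c) := AddCircle.liftIco_zero_continuous hclosed hc
  have hrep (x : AddCircle (1 : ℝ)) : ∃ t ∈ Set.Ico (0 : ℝ) 1, (t : AddCircle (1 : ℝ)) = x := by
    simpa using (AddCircle.coe_image_Ico_eq (1 : ℝ) 0).ge (Set.mem_univ x)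
  have hval {t : ℝ} (ht : t ∈ Set.Ico (0 : ℝ) 1) : AddCircle.liftIco 1 0 c t = c t :=
    AddCircle.liftIco_zero_coe_apply ht
  refine ⟨_, (he.isClosedEmbedding fun x y hxy => ?_).isEmbedding,
    Set.Subset.antisymm ?_ ?_⟩
  · obtain ⟨s, hs, rfl⟩ := hrep x
    obtain ⟨t, ht, rfl⟩ := hrep y
    rw [hval hs, hval ht] at hxy
    rw [hinj hs ht hxy]
  · rintro _ ⟨x, rfl⟩
    obtain ⟨t, ht, rfl⟩ := hrep x
    exact ⟨t, Set.Ico_subset_Icc_self ht, (hval ht).symm⟩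
  · rintro _ ⟨t, ht, rfl⟩
    rcases ht.2.lt_or_eq with hlt | rfl
    · exact ⟨t, hval ⟨ht.1, hlt⟩⟩
    · exact ⟨(0 : ℝ), (hval ⟨le_rfl, zero_lt_one⟩).trans hclosed⟩

theorem exists_simpleClosedCurve_of_isEssentialLoopLift (hP : IsCompact P) {C₀ : ℝ≥0}
    {γ₀ : ℝ → ℝ × ℝ} (hγ₀ : LipschitzWith C₀ γ₀) (hloop₀ : IsEssentialLoopLift P γ₀) :
    ∃ Γ ⊆ P, IsSimpleClosedCurveA Γ ∧ EssentialA Γ := by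
  obtain ⟨C, γ, hγ, hloop, hmin⟩ := exists_shortest_isEssentialLoopLift hP hγ₀ hloop₀
  have hcont : Continuous fun t => projA (γ t) :=
    isOpenQuotientMap_projA.continuous.comp hγ.continuous
  obtain ⟨k, hk, hγk⟩ := hloop.displacement
  obtain ⟨e, he, hrange⟩ := exists_isEmbedding_range_eq_image hcont.continuousOn
    (by rw [hγk, projA_add_intCast]) (injOn_projA_of_shortest hγ hloop hmin)
  refine ⟨_, hloop.mapsTo.image_subset, ⟨e, he, hrange.symm⟩, ?_⟩
  exact IsEssentialLoopLift.essentialA (isCompact_Icc.image hcont) hγ.continuous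
    ⟨Set.mapsTo_image _ _, k, hk, hγk⟩

theorem exists_simpleClosedCurve_of_add_mem_connectedComponentIn {V : Set Ann} (hV : IsOpen V)
    {z : ℝ × ℝ} {k : ℤ} (hk : k ≠ 0)
    (hzk : z + ((k : ℝ), 0) ∈ connectedComponentIn (projA ⁻¹' V) z) :
    ∃ Γ ⊆ V, IsSimpleClosedCurveA Γ ∧ EssentialA Γ := by
  have hprojA := isOpenQuotientMap_projA.continuous
  obtain ⟨C, γ, hγ, rfl, hγ1, hγV⟩ :=
    lipschitzJoinedIn_of_mem_connectedComponentIn (hV.preimage hprojA) hzk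
  obtain ⟨Γ, hΓ, hcurve⟩ := exists_simpleClosedCurve_of_isEssentialLoopLift
    (isCompact_Icc.image (hprojA.comp hγ.continuous)) hγ ⟨Set.mapsTo_image _ _, k, hk, hγ1⟩
  exact ⟨Γ, hΓ.trans (Set.image_subset_iff.2 hγV), hcurve⟩

end ShortestLoop

section NonWanderingDynamics

lemma NonWandering.exists_finset_iterate_mem {X : Type*} [TopologicalSpace X] {f : X → X}
    (hf : Continuous f) (hnw : NonWandering f) (N : ℕ) {U : Set X} (hU : IsOpen U)
    (hne : U.Nonempty) : ∃ A : Finset ℕ, N < A.card ∧ ∃ x, ∀ a ∈ A, f^[a] x ∈ U := by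
  induction N generalizing U with
  | zero =>
    obtain ⟨x, hx⟩ := hne
    exact ⟨{0}, by simp, x, by simpa using hx⟩
  | succ N ih =>
    obtain ⟨m, hm, _, ⟨y, hy, rfl⟩, hmy⟩ := hnw U hU hne
    obtain ⟨A, hA, x, hx⟩ := ih (hU.inter (hU.preimage (hf.iterate m))) ⟨y, hy, hmy⟩
    have hAne : A.Nonempty := Finset.card_pos.1 (Nat.zero_lt_of_lt hA)
    have hnotMem : m + A.max' hAne ∉ A := fun h => by
      have := A.le_max' _ h
      omega
    refine ⟨insert (m + A.max' hAne) A, by rwa [Finset.card_insert_of_notMem hnotMem,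
      Nat.add_lt_add_iff_right], x, Finset.forall_mem_insert _ _ _ |>.2
      ⟨?_, fun a ha => (hx a ha).1⟩⟩
    rw [Function.iterate_add_apply]
    exact (hx _ (A.max'_mem hAne)).2

theorem NonWandering.iterate {X : Type*} [TopologicalSpace X] {f : X → X} (hf : Continuous f)
    (hnw : NonWandering f) {n : ℕ} (hn : 1 ≤ n) : NonWandering f^[n] := by
  intro U hU hne
  obtain ⟨A, hA, x, hx⟩ := hnw.exists_finset_iterate_mem hf n hU hne
  obtain ⟨a, ha, b, hb, hab, hmod⟩ := Finset.exists_ne_map_eq_of_card_lt_of_maps_to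
    (t := Finset.range n) (f := (· % n)) (by simpa using hA)
    fun a _ => Finset.mem_range.2 (Nat.mod_lt a hn)
  wlog hlt : a < b generalizing a b
  · exact this b hb a ha hab.symm hmod.symm (lt_of_le_of_ne (not_lt.1 hlt) hab.symm)
  obtain ⟨q, hq⟩ := (Nat.modEq_iff_dvd' hlt.le).1 hmod
  refine ⟨q, Nat.pos_of_mul_pos_left (a := n) (by omega), _, ⟨f^[a] x, hx a ha, rfl⟩, ?_⟩
  rw [← Function.iterate_mul, ← Function.iterate_add_apply, ← hq, Nat.sub_add_cancel hlt.le]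
  exact hx b hb

variable {H : ℝ × ℝ → ℝ × ℝ} {f : Ann → Ann} {U : Set (ℝ × ℝ)}

theorem NonWandering.not_isWandering_lift (hnw : NonWandering f)
    (hsemi : Function.Semiconj projA H f) (hmaps : Set.MapsTo H U U) (hU : IsOpen U)
    (hdisj : ∀ z ∈ U, ∀ k : ℤ, z + ((k : ℝ), 0) ∈ U → k = 0) {z : ℝ × ℝ} (hz : z ∈ U) :
    ¬ IsWandering H z := by
  rintro ⟨N, hN, hwand⟩
  obtain ⟨W, hWN, hW, hzW⟩ := mem_nhds_iff.1 hN
  obtain ⟨q, hq, _, ⟨_, ⟨y, ⟨hyW, hyU⟩, rfl⟩, rfl⟩, ⟨w, ⟨hwW, hwU⟩, hyw⟩⟩ :=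
    hnw _ (isOpenQuotientMap_projA.isOpenMap _ (hW.inter hU)) ⟨_, z, ⟨hzW, hz⟩, rfl⟩
  rw [← hsemi.iterate_right q, projA_eq_projA_iff] at hyw
  obtain ⟨k, hk⟩ := hyw
  obtain rfl : k = 0 := hdisj w hwU k (hk ▸ hmaps.iterate q hyU)
  have hyw : H^[q] y = w := by simpa [Prod.mk_zero_zero] using hk
  exact hwand y (hWN hyW) q hq (hyw ▸ hWN hwW)

lemma exists_lift_iterate_mapsTo_connectedComponentIn {G : (ℝ × ℝ) ≃ₜ (ℝ × ℝ)}
    (hG : Function.Semiconj projA G f) (hnw : NonWandering f) {V : Set Ann} (hV : IsOpen V)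
    (hVmaps : Set.MapsTo f V V) {z : ℝ × ℝ} (hz : projA z ∈ V) :
    ∃ n, 1 ≤ n ∧ ∃ F : (ℝ × ℝ) ≃ₜ (ℝ × ℝ), Function.Semiconj projA F f^[n] ∧
      Set.MapsTo F (connectedComponentIn (projA ⁻¹' V) z)
        (connectedComponentIn (projA ⁻¹' V) z) := by
  set U := connectedComponentIn (projA ⁻¹' V) z
  have hU : IsOpen U := (hV.preimage isOpenQuotientMap_projA.continuous).connectedComponentIn
  obtain ⟨n, hn, _, ⟨_, ⟨y, hy, rfl⟩, rfl⟩, ⟨w, hw, hyw⟩⟩ := hnw _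
    (isOpenQuotientMap_projA.isOpenMap _ hU) ⟨_, z, mem_connectedComponentIn hz, rfl⟩
  rw [← hG.iterate_right n, eq_comm, projA_eq_projA_iff] at hyw
  obtain ⟨k, rfl⟩ := hyw
  let F : (ℝ × ℝ) ≃ₜ (ℝ × ℝ) := (G ^ n).trans (Homeomorph.addRight ((k : ℝ), 0))
  have hF (x : ℝ × ℝ) : F x = G^[n] x + ((k : ℝ), 0) := by
    rw [← hom_coe_pow (fun h : (ℝ × ℝ) ≃ₜ (ℝ × ℝ) => (h : ℝ × ℝ → ℝ × ℝ)) rfl (fun _ _ => rfl)]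
    rfl
  have hsemi : Function.Semiconj projA F f^[n] := fun x => by
    rw [hF, projA_add_intCast, hG.iterate_right n]
  refine ⟨n, hn, F, hsemi, Set.mapsTo_iff_image_subset.2 ?_⟩
  have hUV : F '' U ⊆ projA ⁻¹' V := by
    rintro _ ⟨x, hx, rfl⟩
    rw [Set.mem_preimage, hsemi]
    exact hVmaps.iterate n (connectedComponentIn_subset (projA ⁻¹' V) z hx)
  have hFy : F y ∈ U := (hF y).symm ▸ hw
  have hpre : IsPreconnected (F '' U) :=
    isPreconnected_connectedComponentIn.image F F.continuous.continuousOn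
  exact (hpre.subset_connectedComponentIn ⟨y, hy, rfl⟩ hUV).trans (connectedComponentIn_eq hFy).ge

end NonWanderingDynamics

theorem statement13_general (f : Ann → Ann) (G : (ℝ × ℝ) ≃ₜ (ℝ × ℝ))
    (hG : Function.Semiconj projA G f) (hnw : NonWandering f) (hnp : ¬ HasPeriodicPoint f)
    (V : Set Ann) (hVo : IsOpen V) (hVne : V.Nonempty) (hVmaps : Set.MapsTo f V V) :
    ∃ Γ ⊆ V, IsSimpleClosedCurveA Γ ∧ EssentialA Γ := by
  have hf : Continuous f := isOpenQuotientMap_projA.isQuotientMap.continuous_iff.2 <| by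
    simpa only [← hG.comp_eq] using isOpenQuotientMap_projA.continuous.comp G.continuous
  obtain ⟨q, hq⟩ := hVne
  obtain ⟨z, rfl⟩ := isOpenQuotientMap_projA.surjective q
  by_contra hcurve
  have hdisj : ∀ w ∈ connectedComponentIn (projA ⁻¹' V) z, ∀ k : ℤ,
      w + ((k : ℝ), 0) ∈ connectedComponentIn (projA ⁻¹' V) z → k = 0 := by
    intro w hw k hwk
    by_contra hk
    rw [connectedComponentIn_eq hw] at hwk
    exact hcurve (exists_simpleClosedCurve_of_add_mem_connectedComponentIn hVo hk hwk)
  obtain ⟨n, hn, F, hF, hFmaps⟩ :=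
    exists_lift_iterate_mapsTo_connectedComponentIn hG hnw hVo hVmaps hq
  have hFF : Function.Semiconj projA (F ∘ F) f^[n + n] := by
    simpa only [Function.iterate_add] using hF.comp_right hF
  have hfix (x : ℝ × ℝ) : F (F x) ≠ x := fun hx =>
    hnp ⟨projA x, n + n, by omega, by rw [← hFF, Function.comp_apply, hx]⟩
  exact (hnw.iterate hf (by omega)).not_isWandering_lift hFF (hFmaps.comp hFmaps)
    (hVo.preimage isOpenQuotientMap_projA.continuous).connectedComponentIn hdisj
    (mem_connectedComponentIn hq) (isWandering_comp_self F hfix z)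

/-- **Lemma 3.5.**  If `f` is a non-wandering homeomorphism of the open annulus
homotopic to the identity and without periodic points, then every nonempty open
`f`-invariant set contains an essential simple closed curve. -/
theorem statement13 (f : Ann ≃ₜ Ann) (G : (ℝ × ℝ) ≃ₜ (ℝ × ℝ)) (hG : IsLiftA f G)
    (hnw : NonWandering (⇑f)) (hnp : ¬ HasPeriodicPoint (⇑f))
    (V : Set Ann) (hVo : IsOpen V) (hVne : V.Nonempty) (hVinv : f '' V = V) :
    ∃ Γ ⊆ V, IsSimpleClosedCurveA Γ ∧ EssentialA Γ := by
  exact statement13_general f G hG.1 hnw hnp V hVo hVne (Set.mapsTo_iff_image_subset.2 hVinv.subset)
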